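/- Let (V,1,𝒮,Y) be a vertex F-algebra over a formal group law F over a commutative ring R. Then for all a,b ∈ V the Jacobi identity holds in V⟦z0^{±1},z1^{±1},z2^{±1}⟧: i_{z1,z0} z2^{-1}δ_F(F(z1,ι z0)/z2)·Y(Y(a,z0)b,z2) = i_{z1,z2} z0^{-1}δ_F(F(z1,ι z2)/z0)·Y(a,z1)Y(b,z2) − i_{z2,z1} z0^{-1}δ_F(F(z1,ι z2)/z0)·Y(b,z2)Y(a,z1), where i_{z1,z2} z0^{-1}δ_F(F(z1,ι z2)/z0) denotes the bilateral series obtained from z0^{-1}δ_F(w/z0) by substituting w^{±1} ↦ i_{z1,z2}F(z1,ι z2)^{±1} (expansion in R((z1))((z2))), and similarly for the other two expansions. -/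

import Mathlib

/-!
Coefficient-wise formal calculus for vertex `F`-algebras, following
M. Upmeier, "Vertex F-Algebras and Their Associated Lie Algebra".

Series in one, two or three variables are represented by their coefficient
functions `ℤ → R`, `ℤ → ℤ → R`, …; products are given by coefficient-wise
(finite) sums, expressed via `finsum` (`∑ᶠ`).
-/

open scoped BigOperators

noncomputable section

/-- Generalized binomial coefficient `C(n,k) = n(n-1)⋯(n-k+1)/k!` for `n : ℤ`, `k : ℕ`. -/
def zbinom (n : ℤ) (k : ℕ) : ℤ :=
  if 0 ≤ n then (n.toNat.choose k : ℤ)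
  else (-1 : ℤ) ^ k * (((k : ℤ) - n - 1).toNat.choose k : ℤ)

/-- `C(n,m)` for integer `m`, with `C(n,m) = 0` for `m < 0`. -/
def zbinomZ (n m : ℤ) : ℤ := if m < 0 then 0 else zbinom n m.toNat

/-- `(-1)^n` for `n : ℤ`. -/
def msign (n : ℤ) : ℤ := if Even n then 1 else -1

section Series

variable {R : Type*} [CommRing R] {M : Type*} [AddCommGroup M] [Module R M]

/-- Product of a one-variable series with `R`-coefficients with an `M`-valued one. -/
def mulS (f : ℤ → R) (g : ℤ → M) : ℤ → M := fun n => ∑ᶠ i : ℤ, f i • g (n - i)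

/-- The constant series `1` (one variable). -/
def oneS (R : Type*) [CommRing R] : ℤ → R := fun n => if n = 0 then 1 else 0

/-- Natural powers of a one-variable series. -/
def pow1 (f : ℤ → R) : ℕ → ℤ → R
  | 0 => oneS R
  | k + 1 => mulS f (pow1 f k)

/-- Product of two-variable series. -/
def mulS2 (f : ℤ → ℤ → R) (g : ℤ → ℤ → M) : ℤ → ℤ → M :=
  fun a b => ∑ᶠ p : ℤ × ℤ, f p.1 p.2 • g (a - p.1) (b - p.2)

/-- The constant series `1` (two variables). -/
def oneS2 (R : Type*) [CommRing R] : ℤ → ℤ → R := fun a b => if a = 0 ∧ b = 0 then 1 else 0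

/-- Natural powers of a two-variable series. -/
def pow2 (f : ℤ → ℤ → R) : ℕ → ℤ → ℤ → R
  | 0 => oneS2 R
  | k + 1 => mulS2 f (pow2 f k)

/-- `f ∈ M((z))`: only finitely many negative powers. -/
def IsLaurent (f : ℤ → M) : Prop := ∃ N : ℤ, ∀ n : ℤ, n < N → f n = 0

/-- `f ∈ M((z,w))`: only finitely many nonzero coefficients with some negative index. -/
def IsLaurent2 (f : ℤ → ℤ → M) : Prop :=
  {p : ℤ × ℤ | (p.1 < 0 ∨ p.2 < 0) ∧ f p.1 p.2 ≠ 0}.Finite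

/-- Formal derivative of a one-variable series. -/
def fderiv1 (f : ℤ → R) : ℤ → R := fun n => ((n + 1 : ℤ) : R) * f (n + 1)

/-- The polynomial `z - w` as a two-variable series. -/
def zmw (R : Type*) [CommRing R] : ℤ → ℤ → R :=
  fun i j => if i = 1 ∧ j = 0 then 1 else if i = 0 ∧ j = 1 then -1 else 0

/-- `∂/∂w` of a two-variable series. -/
def d01 (f : ℤ → ℤ → R) : ℤ → ℤ → R := fun i j => ((j + 1 : ℤ) : R) * f i (j + 1)

/-- `∂/∂z` of a two-variable series. -/
def d10 (f : ℤ → ℤ → R) : ℤ → ℤ → R := fun i j => ((i + 1 : ℤ) : R) * f (i + 1) j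

/-- Substitution `p(f(z,w))` of a two-variable series (zero constant term) into a
one-variable power series `p`. -/
def comp2 (p : ℤ → R) (f : ℤ → ℤ → R) : ℤ → ℤ → R :=
  fun a b => ∑ᶠ m : ℕ, p (m : ℤ) * pow2 f m a b

/-- Substitution `p(f(z))` of a one-variable series (zero constant term) into a
one-variable power series `p`. -/
def comp1 (p : ℤ → R) (f : ℤ → R) : ℤ → R :=
  fun a => ∑ᶠ m : ℕ, p (m : ℤ) * pow1 f m a

/-- `(G - z)/z` for `G ≡ z (mod w)`. -/
def hzS (G : ℤ → ℤ → R) : ℤ → ℤ → R := fun i j => G (i + 1) j - oneS2 R i j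

/-- Integer powers `i_{z,w} G^n`, for `G ≡ z (mod w)`, expanded in `R((z))⟦w⟧`:
the Newton expansion `z^n ∑_k C(n,k) ((G-z)/z)^k`. -/
def izwPow (G : ℤ → ℤ → R) (n : ℤ) : ℤ → ℤ → R :=
  fun a b => ∑ᶠ k : ℕ, (zbinom n k : R) * pow2 (hzS G) k (a - n) b

/-- `(G - w)/w` for `G ≡ w (mod z)`. -/
def hwS (G : ℤ → ℤ → R) : ℤ → ℤ → R := fun i j => G i (j + 1) - oneS2 R i j

/-- Integer powers `i_{w,z} G^n`, for `G ≡ w (mod z)`, expanded in `R((w))⟦z⟧`. -/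
def iwzPow (G : ℤ → ℤ → R) (n : ℤ) : ℤ → ℤ → R :=
  fun a b => ∑ᶠ k : ℕ, (zbinom n k : R) * pow2 (hwS G) k a (b - n)

/-- `(G + w)/(-w)` for `G ≡ ι(w) (mod z)`. -/
def hwNegS (G : ℤ → ℤ → R) : ℤ → ℤ → R := fun i j => -G i (j + 1) - oneS2 R i j

/-- Integer powers `i_{w,z} G^n`, for `G ≡ -w(1+⋯) (mod z)` (e.g. `G = F(z, ι w)`),
expanded in `R((w))⟦z⟧`. -/
def iwzPowNeg (G : ℤ → ℤ → R) (n : ℤ) : ℤ → ℤ → R :=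
  fun a b => (msign n : R) * ∑ᶠ k : ℕ, (zbinom n k : R) * pow2 (hwNegS G) k a (b - n)

/-- `(f + z)/(-z)` for a series `f = -z(1 + ⋯)` such as `ι(z)`. -/
def hS (f : ℤ → R) : ℤ → R := fun j => -f (j + 1) - oneS R j

/-- Integer powers `f(z)^n` (`n : ℤ`) for `f = -z(1+⋯)`, e.g. `f = ι(z)`. -/
def iotaPow (f : ℤ → R) (n : ℤ) : ℤ → R :=
  fun a => (msign n : R) * ∑ᶠ k : ℕ, (zbinom n k : R) * pow1 (hS f) k (a - n)

/-- `f - 1` for a power series with constant term `1`. -/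
def hOneS (f : ℤ → R) : ℤ → R := fun j => f j - oneS R j

/-- Multiplicative inverse of a power series with constant term `1`. -/
def invOne (f : ℤ → R) : ℤ → R :=
  fun a => ∑ᶠ k : ℕ, ((-1 : R) ^ k) * pow1 (hOneS f) k a

end Series

/-- A (one-dimensional, commutative) formal group law `F(z,w)` over `R`, together with
its (unique) inverse `ι`. -/
structure FormalGroupLaw (R : Type*) [CommRing R] where
  F : ℤ → ℤ → R
  F_supp : ∀ i j : ℤ, i < 0 ∨ j < 0 → F i j = 0
  /-- `F(z,0) = z`, so that `F(z,w) = z + w + O(zw)` using commutativity. -/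
  F_modw : ∀ i : ℤ, F i 0 = if i = 1 then 1 else 0
  F_comm : ∀ i j : ℤ, F i j = F j i
  /-- associativity `F(F(z,w),v) = F(z,F(w,v))`, coefficient-wise. -/
  F_assoc : ∀ a b c : ℤ,
    (∑ᶠ m : ℕ, F (m : ℤ) c * pow2 F m a b) = ∑ᶠ n : ℕ, F a (n : ℤ) * pow2 F n b c
  /-- the inverse `ι(z) = -z + O(z²)`. -/
  inv : ℤ → R
  inv_supp : ∀ n : ℤ, n < 1 → inv n = 0
  inv_one : inv 1 = -1
  /-- `F(z, ι(z)) = 0`, coefficient-wise. -/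
  inv_eq : ∀ n : ℤ, (∑ᶠ p : ℤ × ℕ, F p.1 (p.2 : ℤ) * pow1 inv p.2 (n - p.1)) = 0

namespace FormalGroupLaw

variable {R : Type*} [CommRing R] {M : Type*} [AddCommGroup M] [Module R M]

/-- The series `F(z, ι(w))`. -/
def Fzi (𝓕 : FormalGroupLaw R) : ℤ → ℤ → R :=
  fun i j => ∑ᶠ m : ℕ, 𝓕.F i (m : ℤ) * pow1 𝓕.inv m j

/-- The `F`-delta distribution `z⁻¹δ_F(w/z) = i_{z,w}F(z,ιw)⁻¹ - i_{w,z}F(z,ιw)⁻¹`. -/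
def delta (𝓕 : FormalGroupLaw R) : ℤ → ℤ → R :=
  fun a b => izwPow 𝓕.Fzi (-1) a b - iwzPowNeg 𝓕.Fzi (-1) a b

/-- `p_F(z) = F^{0,1}(z,0)⁻¹`, the coefficient series of the invariant 1-form. -/
def pF (𝓕 : FormalGroupLaw R) : ℤ → R := invOne (fun i => 𝓕.F i 1)

/-- `F`-residue: the coefficient of `z⁻¹` in `f(z)·p_F(z)`. -/
def resF (𝓕 : FormalGroupLaw R) (f : ℤ → M) : M := ∑ᶠ i : ℤ, 𝓕.pF i • f (-1 - i)

/-- The `F`-hyperderivative `𝒮^F_n f`, defined by `i_{z,w}f(F(z,w)) = ∑_n (𝒮^F_n f)(z) wⁿ`. -/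
def hyper (𝓕 : FormalGroupLaw R) (n : ℕ) (f : ℤ → R) : ℤ → R :=
  fun a => ∑ᶠ m : ℤ, f m * izwPow 𝓕.F m a (n : ℤ)

/-- `F`-binomial coefficients: `i_{z,w}F(z,w)^n = ∑_{i,j} binomF(n;i,j) z^i w^j`. -/
def binomF (𝓕 : FormalGroupLaw R) (n i j : ℤ) : R := izwPow 𝓕.F n i j

/-- `φ` is a logarithm of `F`: `φ(F(z,w)) = φ(z) + φ(w)`, `φ(0) = 0`, `φ'(0) = 1`. -/
def IsLogarithm (𝓕 : FormalGroupLaw R) (φ : ℤ → R) : Prop :=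
  (∀ n : ℤ, n < 0 → φ n = 0) ∧ φ 0 = 0 ∧ φ 1 = 1 ∧
  ∀ a b : ℤ, (∑ᶠ m : ℕ, φ (m : ℤ) * pow2 𝓕.F m a b)
    = (if b = 0 then φ a else 0) + (if a = 0 then φ b else 0)

end FormalGroupLaw

section Vertex

variable {R : Type*} [CommRing R] {V : Type*} [AddCommGroup V] [Module R V]

/-- For `c = ∑_m c_m v^m ∈ V((v))`, the substitution `v ↦ F(z,w)` (coefficient `(k,n)` of
`z^k w^n`, expanded in `V((z))⟦w⟧`). -/
def substF (𝓕 : FormalGroupLaw R) (c : ℤ → V) : ℤ → ℤ → V :=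
  fun k n => ∑ᶠ m : ℤ, izwPow 𝓕.F m k n • c m

/-- Coefficients of `i_{z,w} Y(a, F(z,w)) (Y(b,w)c)`, where `Ya v = Y(a,·)v` and
`d = Y(b,·)c`. -/
def substFProd (𝓕 : FormalGroupLaw R) (Ya : V → ℤ → V) (d : ℤ → V) : ℤ → ℤ → V :=
  fun k n => ∑ᶠ q : ℤ × ℤ, izwPow 𝓕.F q.1 k (n - q.2) • Ya (d q.2) q.1

end Vertex

/-- A vertex `F`-algebra `(V, 𝟙, 𝒮, Y)` over the formal group law `𝓕`.
`Y a b : ℤ → V` records the coefficients of `Y(a,z)b = ∑_k (Y a b k) z^k`, and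
`S n` is the component `𝒮⁽ⁿ⁾` of the `F`-shift operator `𝒮(z) = ∑_{n≥0} 𝒮⁽ⁿ⁾ zⁿ`. -/
structure VertexFAlgebra (R : Type*) [CommRing R] (𝓕 : FormalGroupLaw R)
    (V : Type*) [AddCommGroup V] [Module R V] where
  vac : V
  S : ℕ → V →ₗ[R] V
  Y : V →ₗ[R] V →ₗ[R] (ℤ → V)
  /-- `Y(a,z)b ∈ V((z))`. -/
  Y_laurent : ∀ a b : V, IsLaurent (Y a b)
  /-- `Y(a,z)𝟙` is holomorphic. -/
  vac_holo : ∀ (a : V) (k : ℤ), k < 0 → Y a vac k = 0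
  /-- `Y(a,z)𝟙|_{z=0} = a`. -/
  creation : ∀ a : V, Y a vac 0 = a
  /-- `Y(𝟙,z) = id`. -/
  Y_vac : ∀ (b : V) (k : ℤ), Y vac b k = if k = 0 then b else 0
  /-- `𝒮(0) = id`. -/
  S_zero : S 0 = LinearMap.id
  /-- `𝒮(z)𝟙 = 𝟙`. -/
  S_vac : ∀ n : ℕ, 1 ≤ n → S n vac = 0
  /-- `𝒮(z) ∘ 𝒮(w) = 𝒮(F(z,w))`, coefficient-wise. -/
  S_comp : ∀ (a : V) (i j : ℕ),
    S i (S j a) = ∑ᶠ m : ℕ, pow2 𝓕.F m (i : ℤ) (j : ℤ) • S m a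
  /-- `F`-translation covariance `Y(𝒮(w)a, z)b = i_{z,w} Y(a,F(z,w))b`. -/
  translation : ∀ (a b : V) (k : ℤ) (n : ℕ),
    Y (S n a) b k = substF 𝓕 (Y a b) k (n : ℤ)
  /-- weak `F`-associativity. -/
  weak_assoc : ∀ a b c : V, ∃ N : ℕ,
    mulS2 (pow2 𝓕.F N) (fun k l => Y (Y a b k) c l)
      = mulS2 (pow2 𝓕.F N) (substFProd 𝓕 (fun v => Y a v) (Y b c))
  /-- skew symmetry `Y(a,z)b = 𝒮(z)(Y(b,ι(z))a)`, coefficient-wise. -/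
  skew : ∀ (a b : V) (k : ℤ),
    Y a b k = ∑ᶠ q : ℕ × ℤ, iotaPow 𝓕.inv q.2 (k - (q.1 : ℤ)) • S q.1 (Y b a q.2)

end

/-!
The equation `z0 = z1 - z2` of the formal group is recorded by one power series `φ`, the formal
difference `z0 - (z1 - z2)`. Its linear part is `z0 - z1 + z2`, so it is invertible in three ways,
according to which of `z0`, `z1`, `z2` is treated as the largest variable; call the expansions of
its inverse `E 0`, `E 1`, `E 2`. The three kernels of the Jacobi identity are differences
`E i - E j`. Each of them is killed by `φ`, so multiplying it with a series in `z0, z1, z2`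
depends only on the restriction of that series to `φ = 0`.

Weak associativity says that the iterate and the product `Y(a,z1)Y(b,z2)` are restrictions of
one and the same series `X` in `z0, z1, z2` that is bounded below in all variables; skew symmetry
gives a second such series `Q` relating the iterate to the opposite product. For series
bounded below in all variables the products with the three `E i` converge separately, so the
identity `(E 0 - E 1) - (E 0 - E 2) = E 2 - E 1` of the kernels can be multiplied through.
-/

section FiniteSums

open Function

theorem exists_ne_zero_of_finsum_ne_zero' {α M : Type*} [AddCommMonoid M] {f : α → M}
    (h : ∑ᶠ a, f a ≠ 0) : ∃ a, f a ≠ 0 := by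
  by_contra! hf
  exact h (finsum_eq_zero_of_forall_eq_zero hf)

theorem finsum_eq_of_injective {α β M : Type*} [AddCommMonoid M] {g : β → α} (hg : Injective g)
    {f : α → M} (h : support f ⊆ Set.range g) : ∑ᶠ x, f x = ∑ᶠ y, f (g y) := by
  rw [← finsum_mem_range hg, finsum_mem_def, Set.indicator_eq_self.mpr h]

variable {α β R M : Type*} [CommRing R] [AddCommGroup M] [Module R M]

theorem finsum_comm_of_finite (f : α → β → M) (hf : {x : α × β | f x.1 x.2 ≠ 0}.Finite) :
    ∑ᶠ a, ∑ᶠ b, f a b = ∑ᶠ b, ∑ᶠ a, f a b := by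
  rw [← finsum_curry (fun x => f x.1 x.2) hf, ← finsum_comp_equiv (Equiv.prodComm β α),
    finsum_curry _ (hf.preimage (Equiv.prodComm β α).injective.injOn)]
  rfl

theorem smul_finsum_of_ne_zero {a : R} {f : β → M} (h : a ≠ 0 → HasFiniteSupport f) :
    a • ∑ᶠ b, f b = ∑ᶠ b, a • f b := by
  rcases eq_or_ne a 0 with rfl | ha
  · simp
  · exact smul_finsum' a (h ha)

theorem finsum_smul_finsum_smul (g : α → R) (K : α → β → R) (c : β → M)
    (h : {x : α × β | g x.1 ≠ 0 ∧ K x.1 x.2 ≠ 0 ∧ c x.2 ≠ 0}.Finite) :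
    ∑ᶠ a, g a • ∑ᶠ b, K a b • c b = ∑ᶠ b, (∑ᶠ a, g a * K a b) • c b := by
  have push (a : α) : g a • ∑ᶠ b, K a b • c b = ∑ᶠ b, (g a * K a b) • c b := by
    rw [smul_finsum_of_ne_zero fun ha => .subset (h.preimage (Prod.mk_right_injective a).injOn)
      fun b hb => ⟨ha, left_ne_zero_of_smul hb, right_ne_zero_of_smul hb⟩]
    simp only [mul_smul]
  have pull (b : β) : (∑ᶠ a, g a * K a b) • c b = ∑ᶠ a, (g a * K a b) • c b := by
    rcases eq_or_ne (c b) 0 with hb | hb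
    · simp [hb]
    · exact finsum_smul' (.subset (h.preimage (Prod.mk_left_injective b).injOn) fun a ha =>
        ⟨left_ne_zero_of_mul ha, right_ne_zero_of_mul ha, hb⟩) (c b)
  simp only [push, pull]
  refine finsum_comm_of_finite _ (h.subset fun x hx => ?_)
  have hgK := left_ne_zero_of_smul hx
  exact ⟨left_ne_zero_of_mul hgK, right_ne_zero_of_mul hgK, right_ne_zero_of_smul hx⟩

theorem finsum_smul_comm_of_finite (g : α → R) (K : β → R) (c : α → β → M)
    (h : {x : α × β | g x.1 ≠ 0 ∧ K x.2 ≠ 0 ∧ c x.1 x.2 ≠ 0}.Finite) :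
    ∑ᶠ a, g a • ∑ᶠ b, K b • c a b = ∑ᶠ b, K b • ∑ᶠ a, g a • c a b := by
  have push_left (a : α) : g a • ∑ᶠ b, K b • c a b = ∑ᶠ b, g a • K b • c a b :=
    smul_finsum_of_ne_zero fun ha => .subset (h.preimage (Prod.mk_right_injective a).injOn)
      fun b hb => ⟨ha, left_ne_zero_of_smul hb, right_ne_zero_of_smul hb⟩
  have push_right (b : β) : K b • ∑ᶠ a, g a • c a b = ∑ᶠ a, g a • K b • c a b := by
    rw [smul_finsum_of_ne_zero fun hb => .subset (h.preimage (Prod.mk_left_injective b).injOn)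
      fun a ha => ⟨left_ne_zero_of_smul ha, hb, right_ne_zero_of_smul ha⟩]
    simp only [smul_comm (K b)]
  simp only [push_left, push_right]
  exact finsum_comm_of_finite _ (h.subset fun x hx => ⟨left_ne_zero_of_smul hx,
    left_ne_zero_of_smul (right_ne_zero_of_smul hx),
    right_ne_zero_of_smul (right_ne_zero_of_smul hx)⟩)

theorem finsum_prod_smul_comm_of_finite {γ : Type*} (g : γ → α → R) (K : γ → β → R)
    (c : α → β → M)
    (h : {x : γ × α × β | g x.1 x.2.1 ≠ 0 ∧ K x.1 x.2.2 ≠ 0 ∧ c x.2.1 x.2.2 ≠ 0}.Finite) :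
    ∑ᶠ x : γ × α, g x.1 x.2 • ∑ᶠ b, K x.1 b • c x.2 b =
      ∑ᶠ x : γ × β, K x.1 x.2 • ∑ᶠ a, g x.1 a • c a x.2 := by
  have finite_left :
      HasFiniteSupport fun x : γ × α => g x.1 x.2 • ∑ᶠ b, K x.1 b • c x.2 b := by
    refine (h.image fun x => (x.1, x.2.1)).subset fun x hx => ?_
    obtain ⟨b, hb⟩ := exists_ne_zero_of_finsum_ne_zero' (right_ne_zero_of_smul hx)
    exact ⟨(x.1, x.2, b), ⟨left_ne_zero_of_smul hx, left_ne_zero_of_smul hb,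
      right_ne_zero_of_smul hb⟩, rfl⟩
  have finite_right :
      HasFiniteSupport fun x : γ × β => K x.1 x.2 • ∑ᶠ a, g x.1 a • c a x.2 := by
    refine (h.image fun x => (x.1, x.2.2)).subset fun x hx => ?_
    obtain ⟨a, ha⟩ := exists_ne_zero_of_finsum_ne_zero' (right_ne_zero_of_smul hx)
    exact ⟨(x.1, a, x.2), ⟨left_ne_zero_of_smul ha, left_ne_zero_of_smul hx,
      right_ne_zero_of_smul ha⟩, rfl⟩
  rw [finsum_curry _ finite_left, finsum_curry _ finite_right]
  exact finsum_congr fun n => finsum_smul_comm_of_finite (g n) (K n) c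
    (h.preimage (Prod.mk_right_injective n).injOn)

end FiniteSums

section Convolution

open Function

variable {G R M : Type*} [AddCommGroup G] [CommRing R] [AddCommGroup M] [Module R M]

/-- The product of two formal series with exponents in `G`, given by their coefficient
functions. As for the products of bilateral series above, it is only meaningful where the sums
are finite. -/
noncomputable def conv (f : G → R) (g : G → M) : G → M := fun e => ∑ᶠ p, f p • g (e - p)

theorem conv_apply (f : G → R) (g : G → M) (e : G) : conv f g e = ∑ᶠ p, f p • g (e - p) := rfl

theorem conv_apply' (f : G → R) (g : G → M) (e : G) : conv f g e = ∑ᶠ p, f (e - p) • g p := by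
  rw [conv_apply, ← finsum_comp_equiv (Equiv.subLeft e)]
  simp

theorem exists_of_conv_ne_zero {f : G → R} {g : G → M} {e : G} (h : conv f g e ≠ 0) :
    ∃ p, f p ≠ 0 ∧ g (e - p) ≠ 0 := by
  obtain ⟨p, hp⟩ := exists_ne_zero_of_finsum_ne_zero' h
  exact ⟨p, left_ne_zero_of_smul hp, right_ne_zero_of_smul hp⟩

theorem conv_comm (f g : G → R) : conv f g = conv g f := by
  funext e
  simp only [conv_apply f, conv_apply' g, smul_eq_mul, mul_comm]

theorem conv_single_left [DecidableEq G] (v : G) (a : R) (f : G → M) (e : G) :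
    conv (Pi.single v a) f e = a • f (e - v) := by
  rw [conv_apply, finsum_eq_single _ v fun p hp => by simp [Pi.single_eq_of_ne hp],
    Pi.single_eq_same]

theorem conv_single_single [DecidableEq G] (v w : G) (a b : R) :
    conv (Pi.single v a) (Pi.single w b) = Pi.single (v + w) (a * b) := by
  funext e
  simp [conv_single_left, Pi.single_apply, sub_eq_iff_eq_add']

theorem conv_one_left [DecidableEq G] (f : G → M) : conv (Pi.single 0 (1 : R)) f = f := by
  funext e
  simp [conv_single_left]

theorem conv_shift_left (f : G → R) (g : G → M) (v e : G) :
    conv (fun q => f (q - v)) g e = conv f g (e - v) := by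
  simp only [conv_apply', sub_right_comm]

theorem conv_shift_right (f : G → R) (g : G → M) (v e : G) :
    conv f (fun q => g (q - v)) e = conv f g (e - v) := by
  simp only [conv_apply, sub_right_comm]

/-- The `k`-th power of a formal series. -/
noncomputable def cpow [DecidableEq G] (f : G → R) : ℕ → G → R
  | 0 => Pi.single 0 1
  | k + 1 => conv f (cpow f k)

end Convolution

section Cones

open Function

variable {G H R M : Type*} [AddCommGroup G] [AddCommGroup H] [PartialOrder H]
  [CommRing R] [AddCommGroup M] {u : G →+ H}

/-- The exponents of the series `f` lie in the translated cone `{p | L ≤ u p}`. -/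
def SupportedAbove (u : G →+ H) (L : H) (f : G → M) : Prop := ∀ p, f p ≠ 0 → L ≤ u p

theorem SupportedAbove.single [DecidableEq G] (u : G →+ H) (v : G) (a : M) :
    SupportedAbove u (u v) (Pi.single v a) := by
  intro p hp
  rw [show p = v by by_contra h; exact hp (Pi.single_eq_of_ne h _)]

theorem SupportedAbove.sub {H : Type*} [AddCommGroup H] [SemilatticeInf H] {u : G →+ H} {L L' : H}
    {f g : G → M} (hf : SupportedAbove u L f) (hg : SupportedAbove u L' g) :
    SupportedAbove u (L ⊓ L') (f - g) := by
  intro e he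
  by_cases h : f e = 0
  · exact inf_le_right.trans (hg e fun h' => he (by simp [h, h']))
  · exact inf_le_left.trans (hf e h)

/-- Only finitely many exponents of the series `f` lie in each translated cone `{p | u p ≤ L}`;
such series can be multiplied by those which are `SupportedAbove u`. -/
def FiniteBelow (u : G →+ H) (f : G → M) : Prop := ∀ L, {p | f p ≠ 0 ∧ u p ≤ L}.Finite

theorem SupportedAbove.finiteBelow [LocallyFiniteOrder H] {L : H} {f : G → M} (hu : Injective u)
    (hf : SupportedAbove u L f) : FiniteBelow u f := fun L' =>
  ((Set.finite_Icc L L').preimage hu.injOn).subset fun p hp => ⟨hf p hp.1, hp.2⟩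

theorem SupportedAbove.map {H' : Type*} [AddCommGroup H'] [PartialOrder H'] {π : H →+ H'} {L : H}
    {f : G → M} (hπ : Monotone π) (hf : SupportedAbove u L f) :
    SupportedAbove (π.comp u) (π L) f :=
  fun p hp => hπ (hf p hp)

variable [IsOrderedAddMonoid H]

protected theorem SupportedAbove.conv [Module R M] {L L' : H} {f : G → R} {g : G → M}
    (hf : SupportedAbove u L f) (hg : SupportedAbove u L' g) :
    SupportedAbove u (L + L') (conv f g) := by
  intro e he
  obtain ⟨p, hp, hp'⟩ := exists_of_conv_ne_zero he
  simpa using add_le_add (hf p hp) (hg _ hp')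

protected theorem SupportedAbove.cpow [DecidableEq G] {L : H} {f : G → R}
    (hf : SupportedAbove u L f) (k : ℕ) : SupportedAbove u (k • L) (cpow f k) := by
  induction k with
  | zero => simpa only [cpow, zero_nsmul, map_zero] using SupportedAbove.single u 0 (1 : R)
  | succ k ih => simpa only [cpow, succ_nsmul'] using hf.conv ih

variable {L L' : H} {f g : G → R} {h : G → M}

theorem SupportedAbove.finite_conv (hf : SupportedAbove u L f) (hh : FiniteBelow u h) (e : G) :
    {p | f p ≠ 0 ∧ h (e - p) ≠ 0}.Finite := by
  refine ((hh (u e - L)).preimage sub_right_injective.injOn).subset fun p hp => ⟨hp.2, ?_⟩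
  rw [map_sub, sub_le_sub_iff_left]
  exact hf p hp.1

theorem SupportedAbove.hasFiniteSupport_conv [Module R M] (hf : SupportedAbove u L f)
    (hh : FiniteBelow u h) (e : G) : HasFiniteSupport fun p => f p • h (e - p) :=
  (hf.finite_conv hh e).subset fun _ hp => ⟨left_ne_zero_of_smul hp, right_ne_zero_of_smul hp⟩

theorem SupportedAbove.conv_add_left [Module R M] (hf : SupportedAbove u L f)
    (hg : SupportedAbove u L' g) (hh : FiniteBelow u h) :
    conv (f + g) h = conv f h + conv g h := by
  funext e
  simp only [conv_apply, Pi.add_apply, add_smul]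
  exact finsum_add_distrib (hf.hasFiniteSupport_conv hh e) (hg.hasFiniteSupport_conv hh e)

theorem SupportedAbove.conv_sub_left [Module R M] {u' : G →+ H} (hf : SupportedAbove u L f)
    (hh : FiniteBelow u h) (hg : SupportedAbove u' L' g) (hh' : FiniteBelow u' h) :
    conv (f - g) h = conv f h - conv g h := by
  funext e
  simp only [conv_apply, Pi.sub_apply, sub_smul]
  exact finsum_sub_distrib (hf.hasFiniteSupport_conv hh e) (hg.hasFiniteSupport_conv hh' e)

theorem SupportedAbove.conv_sub_right [Module R M] {h' : G → M} (hf : SupportedAbove u L f)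
    (hh : FiniteBelow u h) (hh' : FiniteBelow u h') :
    conv f (h - h') = conv f h - conv f h' := by
  funext e
  simp only [conv_apply, Pi.sub_apply, smul_sub]
  exact finsum_sub_distrib (hf.hasFiniteSupport_conv hh e) (hf.hasFiniteSupport_conv hh' e)

variable [LocallyFiniteOrder H]

theorem SupportedAbove.finite_conv_conv (hu : Injective u) (hf : SupportedAbove u L f)
    (hg : SupportedAbove u L' g) (hh : FiniteBelow u h) (e : G) :
    {x : G × G | f x.1 ≠ 0 ∧ g (x.2 - x.1) ≠ 0 ∧ h (e - x.2) ≠ 0}.Finite := by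
  have finite_snd : {y | h (e - y) ≠ 0 ∧ u (e - y) ≤ u e - (L + L')}.Finite :=
    (hh _).preimage sub_right_injective.injOn
  refine (finite_snd.biUnion fun y _ => ((Set.finite_Icc L (u y - L')).preimage
    hu.injOn).prod (Set.finite_singleton y)).subset fun x ⟨hx, hy, hz⟩ => ?_
  have hfx := hf _ hx
  have hgy : L' ≤ u x.2 - u x.1 := by simpa using hg _ hy
  simp only [Set.mem_iUnion]
  refine ⟨x.2, ⟨hz, ?_⟩, ⟨hfx, le_sub_comm.mp hgy⟩, rfl⟩
  rw [map_sub, sub_le_sub_iff_left]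
  simpa using add_le_add hfx hgy

variable [Module R M]

theorem SupportedAbove.conv_assoc (hu : Injective u) (hf : SupportedAbove u L f)
    (hg : SupportedAbove u L' g) (hh : FiniteBelow u h) :
    conv (conv f g) h = conv f (conv g h) := by
  funext e
  have reindex (p : G) : conv g h (e - p) = ∑ᶠ q, g (q - p) • h (e - q) := by
    rw [conv_apply, ← finsum_comp_equiv (Equiv.subRight p)]
    simp
  simp only [conv_apply f, reindex]
  exact (finsum_smul_finsum_smul f (fun p q => g (q - p)) (fun q => h (e - q))
    (hf.finite_conv_conv hu hg hh e)).symm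

theorem SupportedAbove.conv_conv_conv_comm {L₁ L₂ L₃ L₄ : H} {f₁ f₂ f₃ f₄ : G → R}
    (hu : Injective u) (h₁ : SupportedAbove u L₁ f₁) (h₂ : SupportedAbove u L₂ f₂)
    (h₃ : SupportedAbove u L₃ f₃) (h₄ : SupportedAbove u L₄ f₄) :
    conv (conv f₁ f₂) (conv f₃ f₄) = conv (conv f₁ f₃) (conv f₂ f₄) := by
  have hb₄ := h₄.finiteBelow hu
  rw [h₁.conv_assoc hu h₂ ((h₃.conv h₄).finiteBelow hu), ← h₂.conv_assoc hu h₃ hb₄, conv_comm f₂,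
    h₃.conv_assoc hu h₂ hb₄, ← h₁.conv_assoc hu h₃ ((h₂.conv h₄).finiteBelow hu)]

end Cones

section NewtonPowers

open Function

theorem zbinom_eq_choose (n : ℤ) (k : ℕ) : zbinom n k = Ring.choose n k := by
  unfold zbinom
  split_ifs with hn
  · obtain ⟨m, rfl⟩ := Int.eq_ofNat_of_zero_le hn
    simp [Ring.choose_natCast]
  · have h := Ring.choose_neg (-n) k
    have hnk : -n + k - 1 = (((k : ℤ) - n - 1).toNat : ℤ) := by omega
    rw [neg_neg, hnk, Ring.choose_natCast] at h
    rw [h, Units.smul_def, Int.negOnePow_def]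
    simp

theorem msign_eq_zpow (R : Type*) [CommRing R] (n : ℤ) :
    (msign n : R) = (((-1 : Rˣ) ^ n : Rˣ) : R) := by
  rcases Int.even_or_odd n with h | h
  · simp [msign, h, h.neg_one_zpow]
  · simp [msign, Int.not_even_iff_odd.mpr h, h.neg_one_zpow]

theorem finsum_nat_eq_zero_add {M : Type*} [AddCommMonoid M] {f : ℕ → M}
    (hf : HasFiniteSupport f) : ∑ᶠ k, f k = f 0 + ∑ᶠ k, f (k + 1) := by
  obtain ⟨N, hN⟩ := hf.bddAbove
  rw [finsum_eq_sum_of_support_subset (s := Finset.range (N + 1)),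
    finsum_eq_sum_of_support_subset (s := Finset.range N), Finset.sum_range_succ', add_comm]
  · intro k hk
    exact Finset.mem_coe.mpr (Finset.mem_range.mpr (hN hk))
  · intro k hk
    exact Finset.mem_coe.mpr (Finset.mem_range.mpr (Nat.lt_succ_of_le (hN hk)))

variable {G H R : Type*} [AddCommGroup G] [DecidableEq G] [AddCommGroup H] [PartialOrder H]
  [IsOrderedAddMonoid H] [CommRing R] {u : G →+ H} {l : H} {h : G → R}

/-- The Newton expansion `∑ₖ C(n,k) hᵏ` of `(1 + h)ⁿ`. -/
noncomputable def newton (h : G → R) (n : ℤ) : G → R :=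
  fun e => ∑ᶠ k : ℕ, (zbinom n k : R) * cpow h k e

theorem newton_zero (h : G → R) : newton h 0 = Pi.single 0 1 := by
  funext e
  unfold newton
  rw [finsum_eq_single _ 0 fun k hk => by
    rw [zbinom_eq_choose, Ring.choose_zero_pos ℤ hk.bot_lt, Int.cast_zero, zero_mul]]
  simp [zbinom_eq_choose, cpow]

protected theorem SupportedAbove.newton (hl : 0 ≤ l) (hh : SupportedAbove u l h) (n : ℤ) :
    SupportedAbove u 0 (newton h n) := by
  intro e he
  obtain ⟨k, hk⟩ := exists_ne_zero_of_finsum_ne_zero' he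
  exact (nsmul_nonneg hl k).trans (hh.cpow k e (right_ne_zero_of_mul hk))

variable [LocallyFiniteOrder H]

theorem SupportedAbove.finite_cpow (hl : 0 < l) (hh : SupportedAbove u l h) (e : G) :
    {k : ℕ | cpow h k e ≠ 0}.Finite :=
  ((Set.finite_Icc 0 (u e)).preimage (nsmul_left_strictMono hl).injective.injOn).subset
    fun k hk => ⟨nsmul_nonneg hl.le k, hh.cpow k e hk⟩

theorem conv_newton (hu : Injective u) (hl : 0 < l) (hh : SupportedAbove u l h) (n : ℤ) (e : G) :
    conv h (newton h n) e = ∑ᶠ k : ℕ, (zbinom n k : R) * cpow h (k + 1) e := by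
  have hfin :
      {x : G × ℕ | h x.1 ≠ 0 ∧ cpow h x.2 (e - x.1) ≠ 0 ∧ (zbinom n x.2 : R) ≠ 0}.Finite := by
    refine (((Set.finite_Icc 0 (u e)).preimage hu.injOn).prod ((Set.finite_Icc 0 (u e)).preimage
      (nsmul_left_strictMono hl).injective.injOn)).subset fun x ⟨hx, hx', _⟩ => ?_
    have h₁ := hl.le.trans (hh _ hx)
    have h₂ : x.2 • l ≤ u e - u x.1 := by simpa using hh.cpow x.2 _ hx'
    have h₃ := nsmul_nonneg hl.le x.2
    exact ⟨⟨h₁, sub_nonneg.mp (h₃.trans h₂)⟩, h₃, h₂.trans (sub_le_self _ h₁)⟩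
  calc conv h (newton h n) e
      = ∑ᶠ p, h p • ∑ᶠ k : ℕ, cpow h k (e - p) • (zbinom n k : R) := by
        simp only [conv_apply, newton, smul_eq_mul, mul_comm]
    _ = ∑ᶠ k : ℕ, cpow h (k + 1) e • (zbinom n k : R) := finsum_smul_finsum_smul _ _ _ hfin
    _ = ∑ᶠ k : ℕ, (zbinom n k : R) * cpow h (k + 1) e := by simp only [smul_eq_mul, mul_comm]

theorem newton_add_one (hu : Injective u) (hl : 0 < l) (hh : SupportedAbove u l h) (n : ℤ) :
    newton h (n + 1) = conv (Pi.single 0 1 + h) (newton h n) := by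
  funext e
  have hN := hh.newton hl.le n
  have hfin (m : ℤ) : HasFiniteSupport fun k : ℕ => (zbinom m k : R) * cpow h k e :=
    (hh.finite_cpow hl e).subset fun k hk => right_ne_zero_of_mul hk
  have hfin' (c : ℕ → R) : HasFiniteSupport fun k => c k * cpow h (k + 1) e :=
    ((hh.finite_cpow hl e).preimage (add_left_injective 1).injOn).subset
      fun k hk => right_ne_zero_of_mul hk
  have one_above : SupportedAbove u 0 (Pi.single 0 1 : G → R) := by
    simpa using SupportedAbove.single u 0 (1 : R)
  calc newton h (n + 1) e
      = cpow h 0 e + ∑ᶠ k : ℕ, ((zbinom n k : R) + zbinom n (k + 1)) * cpow h (k + 1) e := by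
        rw [newton, finsum_nat_eq_zero_add (hfin _)]
        simp [zbinom_eq_choose, Ring.choose_succ_succ]
    _ = newton h n e + ∑ᶠ k : ℕ, (zbinom n k : R) * cpow h (k + 1) e := by
        simp only [newton, add_mul]
        rw [finsum_nat_eq_zero_add (hfin n), finsum_add_distrib (hfin' _) (hfin' _)]
        simp [zbinom_eq_choose, add_comm, add_left_comm]
    _ = conv (Pi.single 0 1 + h) (newton h n) e := by
        rw [one_above.conv_add_left hh (hN.finiteBelow hu), conv_one_left, Pi.add_apply,
          conv_newton hu hl hh]

theorem newton_one (hu : Injective u) (hl : 0 < l) (hh : SupportedAbove u l h) :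
    newton h 1 = Pi.single 0 1 + h := by
  rw [← zero_add 1, newton_add_one hu hl hh, newton_zero, conv_comm, conv_one_left]

theorem conv_eq_of_conv_one {M : Type*} [AddCommGroup M] [Module R M] {P : ℤ → G → R}
    {D : ℤ → G → M} (hu : Injective u) (above : ∀ n, SupportedAbove u (n • l) (P n))
    (zero : P 0 = Pi.single 0 1) (add_one : ∀ n, P (n + 1) = conv (P 1) (P n))
    (hD : ∀ m, FiniteBelow u (D m)) (conv_one : ∀ m, conv (P 1) (D m) = D (m + 1)) (k m : ℤ) :
    conv (P k) (D m) = D (m + k) := by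
  induction k generalizing m with
  | zero => rw [zero, conv_one_left, add_zero]
  | succ k ih =>
    rw [add_one, (above 1).conv_assoc hu (above k) (hD m), ih, conv_one, add_assoc]
  | pred k ih =>
    rw [← sub_add_cancel m 1, ← conv_one, ← (above _).conv_assoc hu (above 1) (hD _),
      conv_comm (P _), ← add_one, sub_add_cancel, ih]
    congr 1
    abel

theorem newton_add (hu : Injective u) (hl : 0 < l) (hh : SupportedAbove u l h) (m n : ℤ) :
    newton h (m + n) = conv (newton h m) (newton h n) := by
  have above (n : ℤ) : SupportedAbove u (n • (0 : H)) (newton h n) := by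
    simpa using hh.newton hl.le n
  have add_one (n : ℤ) : newton h (n + 1) = conv (newton h 1) (newton h n) := by
    rw [newton_one hu hl hh, newton_add_one hu hl hh]
  rw [conv_eq_of_conv_one hu above (newton_zero h) add_one (fun n => (above n).finiteBelow hu)
    (fun n => (add_one n).symm), add_comm]

/-- `P n` is the `n`-th power of the series `g`, for all integers `n`, expanded in the cone
determined by `u`. -/
structure IsZPowFamily (u : G →+ H) (l : H) (g : G → R) (P : ℤ → G → R) : Prop where
  zero : P 0 = Pi.single 0 1
  one : P 1 = g
  add : ∀ m n, P (m + n) = conv (P m) (P n)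
  above : ∀ n, SupportedAbove u (n • l) (P n)

theorem isZPowFamily_newton (hu : Injective u) (hl : 0 < l) (hh : SupportedAbove u l h)
    (ε : Rˣ) (v : G) :
    IsZPowFamily u (u v) (conv (Pi.single v (ε : R)) (Pi.single 0 1 + h))
      fun n => conv (Pi.single (n • v) ((ε ^ n : Rˣ) : R)) (newton h n) where
  zero := by simp [newton_zero, conv_one_left]
  one := by simp [newton_one hu hl hh]
  add m n := by
    rw [SupportedAbove.conv_conv_conv_comm hu (.single u _ _) (hh.newton hl.le m) (.single u _ _)
      (hh.newton hl.le n), conv_single_single, newton_add hu hl hh, add_zsmul, zpow_add,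
      Units.val_mul]
  above n := by simpa using (SupportedAbove.single u (n • v) _).conv (hh.newton hl.le n)

namespace IsZPowFamily

omit [LocallyFiniteOrder H] [IsOrderedAddMonoid H]

variable {g : G → R} {P : ℤ → G → R}

theorem natCast (hP : IsZPowFamily u l g P) (k : ℕ) : P k = cpow g k := by
  induction k with
  | zero => exact hP.zero
  | succ k ih => rw [Nat.cast_succ, add_comm, hP.add, hP.one, ih, cpow]

theorem conv_eq [IsOrderedAddMonoid H] [LocallyFiniteOrder H] {M : Type*} [AddCommGroup M]
    [Module R M] {D : ℤ → G → M} (hu : Injective u) (hP : IsZPowFamily u l g P)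
    (hD : ∀ m, FiniteBelow u (D m)) (conv_g : ∀ m, conv g (D m) = D (m + 1)) (k m : ℤ) :
    conv (P k) (D m) = D (m + k) :=
  conv_eq_of_conv_one hu hP.above hP.zero
    (fun n => by rw [hP.add, conv_comm]) hD (by rwa [hP.one]) k m

theorem map {H' : Type*} [AddCommGroup H'] [PartialOrder H'] (hP : IsZPowFamily u l g P)
    (π : H →+ H') (hπ : Monotone π) : IsZPowFamily (π.comp u) (π l) g P where
  zero := hP.zero
  one := hP.one
  add := hP.add
  above n p hp := by simpa using hπ (hP.above n p hp)

end IsZPowFamily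

end NewtonPowers

section BivariatePowers

open Function

variable {R : Type*} [CommRing R]

theorem pow1_eq_cpow (f : ℤ → R) (k : ℕ) : pow1 f k = cpow f k := by
  induction k with
  | zero => funext n; simp [pow1, cpow, oneS, Pi.single_apply]
  | succ k ih => rw [pow1, ih]; rfl

theorem uncurry_pow2 (f : ℤ → ℤ → R) (k : ℕ) : uncurry (pow2 f k) = cpow (uncurry f) k := by
  induction k with
  | zero => funext p; simp [pow2, cpow, oneS2, Pi.single_apply, Prod.ext_iff, uncurry_def]
  | succ k ih => rw [cpow, ← ih]; rfl

/-- The exponents of `R((z))⟦w⟧`, seen through the total degree and the degree in `w`. -/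
def degSnd : ℤ × ℤ →+ ℤ × ℤ := (AddMonoidHom.fst ℤ ℤ + AddMonoidHom.snd ℤ ℤ).prod (.snd ℤ ℤ)

/-- The exponents of `R((w))⟦z⟧`, seen through the total degree and the degree in `z`. -/
def degFst : ℤ × ℤ →+ ℤ × ℤ := (AddMonoidHom.fst ℤ ℤ + AddMonoidHom.snd ℤ ℤ).prod (.fst ℤ ℤ)

@[simp] theorem degSnd_apply (p : ℤ × ℤ) : degSnd p = (p.1 + p.2, p.2) := rfl

@[simp] theorem degFst_apply (p : ℤ × ℤ) : degFst p = (p.1 + p.2, p.1) := rfl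

theorem degFst_injective : Injective degFst := by
  intro p q h
  simp only [degFst_apply, Prod.mk.injEq] at h
  ext <;> lia

theorem degSnd_injective : Injective degSnd := by
  intro p q h
  simp only [degSnd_apply, Prod.mk.injEq] at h
  ext <;> lia

variable {G : ℤ → ℤ → R} (hG : SupportedAbove (.id (ℤ × ℤ)) 0 (uncurry G))
include hG

theorem isZPowFamily_izwPow (hG0 : ∀ i, G i 0 = if i = 1 then 1 else 0) :
    IsZPowFamily degSnd (1, 0) (uncurry G) fun n => uncurry (izwPow G n) := by
  have small : SupportedAbove degSnd (0, 1) (uncurry (hzS G)) := by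
    rintro ⟨i, j⟩ hp
    have hj0 : j ≠ 0 := by rintro rfl; simp [hzS, oneS2, hG0] at hp
    have hGp : G (i + 1) j ≠ 0 := by simpa [hzS, oneS2, hj0] using hp
    have hG' : 0 ≤ i + 1 ∧ 0 ≤ j := hG (i + 1, j) hGp
    exact ⟨show 0 ≤ i + j by lia, show 1 ≤ j by lia⟩
  convert isZPowFamily_newton degSnd_injective (by simp [Prod.lt_iff]) small 1 (1, 0) using 1
  · rfl
  · funext ⟨i, j⟩
    simp [conv_single_left, hzS, oneS2, Pi.single_apply, Prod.ext_iff]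
  · funext n ⟨i, j⟩
    simp [conv_single_left, izwPow, newton, ← uncurry_pow2]

theorem isZPowFamily_iwzPowNeg (hG0 : G 0 0 = 0) (hG1 : G 0 1 = -1) :
    IsZPowFamily degFst (1, 0) (uncurry G) fun n => uncurry (iwzPowNeg G n) := by
  -- `hwNegS G` is small only for the weighted degree `2i + j`, which is added to `degFst`.
  let u : ℤ × ℤ →+ (ℤ × ℤ) × ℤ :=
    degFst.prod (2 • AddMonoidHom.fst ℤ ℤ + AddMonoidHom.snd ℤ ℤ)
  have u_injective : Injective u := by
    intro p q h
    simp only [u, AddMonoidHom.prod_apply, degFst_apply, Prod.mk.injEq] at h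
    ext <;> lia
  have small : SupportedAbove u ((0, 0), 1) (uncurry (hwNegS G)) := by
    rintro ⟨i, j⟩ hp
    suffices h : 0 ≤ i ∧ 0 ≤ i + j ∧ 1 ≤ 2 * i + j from
      ⟨⟨h.2.1, h.1⟩, by simpa [u] using h.2.2⟩
    rcases eq_or_ne i 0 with rfl | hi
    · have hj0 : j ≠ 0 := by rintro rfl; simp [hwNegS, oneS2, hG1] at hp
      have hj1 : j ≠ -1 := by rintro rfl; simp [hwNegS, oneS2, hG0] at hp
      have hGp : G 0 (j + 1) ≠ 0 := by simpa [hwNegS, oneS2, hj0] using hp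
      have hG' : 0 ≤ (0 : ℤ) ∧ 0 ≤ j + 1 := hG (0, j + 1) hGp
      lia
    · have hGp : G i (j + 1) ≠ 0 := by simpa [hwNegS, oneS2, hi] using hp
      have hG' : 0 ≤ i ∧ 0 ≤ j + 1 := hG (i, j + 1) hGp
      lia
  have family := (isZPowFamily_newton u_injective (by simp [Prod.lt_iff, Prod.le_def]) small (-1)
    (0, 1)).map (.fst _ _) fun _ _ h => h.1
  convert family using 1
  · rfl
  · rfl
  · funext ⟨i, j⟩
    simp [conv_single_left, hwNegS, oneS2, Pi.single_apply, Prod.ext_iff]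
  · funext n ⟨i, j⟩
    simp [conv_single_left, iwzPowNeg, newton, ← uncurry_pow2, msign_eq_zpow]

omit hG

theorem isZPowFamily_iotaPow {f : ℤ → R} (hf : ∀ n < 1, f n = 0) (hf1 : f 1 = -1) :
    IsZPowFamily (.id ℤ) 1 f (iotaPow f) := by
  have small : SupportedAbove (.id ℤ) 1 (hS f) := by
    intro n hn
    by_contra h
    have hn1 : n < 0 + 1 := by simpa using h
    rcases (Int.lt_add_one_iff.mp hn1).eq_or_lt with h0 | h0
    · simp_all [hS, oneS]
    · exact hn (by simp [hS, oneS, hf (n + 1) (by lia), h0.ne])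
  convert isZPowFamily_newton injective_id one_pos small (-1) 1 using 1
  · rfl
  · funext n
    simp [conv_single_left, hS, oneS, Pi.single_apply]
  · funext n a
    simp [conv_single_left, iotaPow, newton, pow1_eq_cpow, msign_eq_zpow]

end BivariatePowers

namespace FormalGroupLaw

open Function

variable {R : Type*} [CommRing R] (𝓕 : FormalGroupLaw R)

theorem supportedAbove_F : SupportedAbove (.id (ℤ × ℤ)) 0 (uncurry 𝓕.F) := by
  rintro ⟨i, j⟩ h
  by_contra hij
  refine h (𝓕.F_supp i j ?_)
  by_contra! hpos
  exact hij hpos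

theorem isZPowFamily_iotaPow : IsZPowFamily (.id ℤ) 1 𝓕.inv (iotaPow 𝓕.inv) :=
  _root_.isZPowFamily_iotaPow 𝓕.inv_supp 𝓕.inv_one

theorem le_of_pow1_inv_ne_zero {m : ℕ} {j : ℤ} (h : pow1 𝓕.inv m j ≠ 0) : (m : ℤ) ≤ j := by
  rw [pow1_eq_cpow, ← 𝓕.isZPowFamily_iotaPow.natCast] at h
  simpa using 𝓕.isZPowFamily_iotaPow.above m j h

theorem supportedAbove_Fzi : SupportedAbove (.id (ℤ × ℤ)) 0 (uncurry 𝓕.Fzi) := by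
  rintro ⟨i, j⟩ h
  obtain ⟨m, hm⟩ := exists_ne_zero_of_finsum_ne_zero' h
  have hF := 𝓕.supportedAbove_F (i, m) (left_ne_zero_of_mul hm)
  exact ⟨hF.1, (Int.natCast_nonneg m).trans (𝓕.le_of_pow1_inv_ne_zero (right_ne_zero_of_mul hm))⟩

theorem Fzi_zero_right (i : ℤ) : 𝓕.Fzi i 0 = if i = 1 then 1 else 0 := by
  rw [Fzi, finsum_eq_single _ 0]
  · simp [pow1, oneS, 𝓕.F_modw]
  · intro m hm
    by_contra h
    have := 𝓕.le_of_pow1_inv_ne_zero (right_ne_zero_of_mul h)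
    lia

theorem Fzi_zero_left (j : ℤ) : 𝓕.Fzi 0 j = 𝓕.inv j := by
  rw [Fzi, finsum_eq_single _ 1]
  · simp [𝓕.F_comm 0, 𝓕.F_modw, pow1_eq_cpow, cpow, conv_comm 𝓕.inv, conv_one_left]
  · intro m hm
    simp [𝓕.F_comm 0, 𝓕.F_modw, hm]

theorem isZPowFamily_izwPow_F :
    IsZPowFamily degSnd (1, 0) (uncurry 𝓕.F) fun n => uncurry (izwPow 𝓕.F n) :=
  isZPowFamily_izwPow 𝓕.supportedAbove_F 𝓕.F_modw

theorem isZPowFamily_izwPow_Fzi :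
    IsZPowFamily degSnd (1, 0) (uncurry 𝓕.Fzi) fun n => uncurry (izwPow 𝓕.Fzi n) :=
  isZPowFamily_izwPow 𝓕.supportedAbove_Fzi 𝓕.Fzi_zero_right

theorem isZPowFamily_iwzPowNeg_Fzi :
    IsZPowFamily degFst (1, 0) (uncurry 𝓕.Fzi) fun n => uncurry (iwzPowNeg 𝓕.Fzi n) :=
  isZPowFamily_iwzPowNeg 𝓕.supportedAbove_Fzi (by simp [Fzi_zero_right])
    (by rw [Fzi_zero_left, 𝓕.inv_one])

end FormalGroupLaw

section BilateralSeries

open Function MvPowerSeries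

variable {R : Type*} [CommRing R] {G : Type*} [AddCommGroup G] {σ : Type*}

/-- The power series whose coefficients are the values of `f` at the exponents in the range
of `j`. -/
noncomputable def ofCoeffs (j : (σ →₀ ℕ) →+ G) (f : G → R) : MvPowerSeries σ R :=
  fun d => f (j d)

@[simp] theorem coeff_ofCoeffs (j : (σ →₀ ℕ) →+ G) (f : G → R) (d : σ →₀ ℕ) :
    coeff d (ofCoeffs j f) = f (j d) := rfl

/-- The coefficient function of a power series, extended by zero along the embedding `j` of the
exponents. -/
noncomputable def bilateral (j : (σ →₀ ℕ) →+ G) (f : MvPowerSeries σ R) : G → R :=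
  extend j (fun d => coeff d f) 0

variable {j : (σ →₀ ℕ) →+ G}

theorem support_bilateral_subset (f : MvPowerSeries σ R) :
    support (bilateral j f) ⊆ Set.range j := by
  intro p hp
  by_contra hpj
  exact hp (extend_apply' _ _ _ hpj)

variable (hj : Injective j)
include hj

theorem bilateral_apply (f : MvPowerSeries σ R) (d : σ →₀ ℕ) :
    bilateral j f (j d) = coeff d f :=
  hj.extend_apply _ _ _

theorem bilateral_eq {f : MvPowerSeries σ R} {g : G → R} (hg : support g ⊆ Set.range j)
    (h : ∀ d, coeff d f = g (j d)) : bilateral j f = g := by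
  funext p
  by_cases hp : p ∈ Set.range j
  · obtain ⟨d, rfl⟩ := hp
    rw [bilateral_apply hj, h]
  · rw [notMem_support.mp (mt (@hg p) hp),
      notMem_support.mp (mt (@support_bilateral_subset _ _ _ _ _ j f p) hp)]

theorem bilateral_ofCoeffs {f : G → R} (hf : support f ⊆ Set.range j) :
    bilateral j (ofCoeffs j f) = f :=
  bilateral_eq hj hf fun _ => rfl

theorem bilateral_sub (f g : MvPowerSeries σ R) :
    bilateral j (f - g) = bilateral j f - bilateral j g := by
  refine bilateral_eq hj ((support_sub _ _).trans
    (Set.union_subset (support_bilateral_subset f) (support_bilateral_subset g))) fun d => ?_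
  simp [bilateral_apply hj]

theorem bilateral_monomial [DecidableEq G] (d : σ →₀ ℕ) (a : R) :
    bilateral j (monomial d a) = Pi.single (j d) a := by
  classical
  refine bilateral_eq hj ?_ fun d' => ?_
  · intro p hp
    by_contra h
    exact hp (by simp [show p ≠ j d from fun hp' => h ⟨d, hp'.symm⟩])
  · rw [coeff_monomial, Pi.single_apply]
    simp only [hj.eq_iff]

theorem bilateral_mul (f g : MvPowerSeries σ R) :
    bilateral j (f * g) = conv (bilateral j f) (bilateral j g) := by
  classical
  refine bilateral_eq hj ?_ fun d => ?_
  · intro e he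
    obtain ⟨p, hp, hp'⟩ := exists_of_conv_ne_zero he
    obtain ⟨a, ha⟩ := support_bilateral_subset f hp
    obtain ⟨b, hb⟩ := support_bilateral_subset g hp'
    exact ⟨a + b, by rw [map_add, ha, hb, add_sub_cancel]⟩
  · rw [coeff_mul, conv_apply, finsum_eq_sum_of_support_subset
      (s := (Finset.HasAntidiagonal.antidiagonal d).image fun q => j q.1), Finset.sum_image]
    · refine Finset.sum_congr rfl fun q hq => ?_
      rw [← Finset.HasAntidiagonal.mem_antidiagonal.mp hq, map_add, add_sub_cancel_left,
        bilateral_apply hj, bilateral_apply hj, smul_eq_mul]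
    · rintro ⟨a, b⟩ hab ⟨a', b'⟩ hab' h
      obtain rfl : a = a' := hj h
      simp only [Finset.mem_coe, Finset.HasAntidiagonal.mem_antidiagonal] at hab hab'
      rw [add_left_cancel (hab.trans hab'.symm)]
    · intro p hp
      obtain ⟨a, rfl⟩ := support_bilateral_subset f (left_ne_zero_of_smul hp)
      obtain ⟨b, hb⟩ := support_bilateral_subset g (right_ne_zero_of_smul hp)
      refine Finset.mem_image.mpr
        ⟨(a, b), Finset.HasAntidiagonal.mem_antidiagonal.mpr (hj ?_), rfl⟩
      simp [hb]

theorem bilateral_pow [DecidableEq G] (f : MvPowerSeries σ R) (n : ℕ) :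
    bilateral j (f ^ n) = cpow (bilateral j f) n := by
  induction n with
  | zero =>
    rw [pow_zero, cpow, ← monomial_zero_one, bilateral_monomial hj, map_zero]
  | succ n ih => rw [pow_succ', bilateral_mul hj, ih, cpow]

theorem ofCoeffs_pow [DecidableEq G] {f : G → R} (hf : support f ⊆ Set.range j) (n : ℕ) :
    ofCoeffs j f ^ n = ofCoeffs j (cpow f n) := by
  ext d
  rw [← bilateral_apply hj, bilateral_pow hj, bilateral_ofCoeffs hj hf, coeff_ofCoeffs]

omit hj

/-- The exponents of power series in one variable. -/
def exps₁ : (Unit →₀ ℕ) →+ ℤ where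
  toFun d := d ()
  map_zero' := by simp
  map_add' := by simp

/-- The exponents of power series in two variables. -/
def exps₂ : (Fin 2 →₀ ℕ) →+ ℤ × ℤ where
  toFun d := (d 0, d 1)
  map_zero' := by simp
  map_add' := by simp

/-- The exponents of power series in three variables. -/
def exps₃ : (Fin 3 →₀ ℕ) →+ (Fin 3 → ℤ) where
  toFun d i := d i
  map_zero' := by ext; simp
  map_add' _ _ := by ext; simp

@[simp] theorem exps₁_apply (d : Unit →₀ ℕ) : exps₁ d = d () := rfl

@[simp] theorem exps₂_apply (d : Fin 2 →₀ ℕ) : exps₂ d = (↑(d 0), ↑(d 1)) := rfl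

@[simp] theorem exps₃_apply (d : Fin 3 →₀ ℕ) (i : Fin 3) : exps₃ d i = d i := rfl

theorem exps₁_injective : Injective exps₁ := by
  intro p q h
  ext
  simpa using h

theorem exps₂_injective : Injective exps₂ := by
  intro p q h
  ext i
  fin_cases i <;> simp_all

theorem exps₃_injective : Injective exps₃ := fun _ _ h =>
  Finsupp.ext fun i => Nat.cast_injective (congrFun h i)

theorem mem_range_exps₁ {p : ℤ} (hp : 0 ≤ p) : p ∈ Set.range exps₁ :=
  ⟨Finsupp.single () p.toNat, by simp [hp]⟩

theorem mem_range_exps₂ {p : ℤ × ℤ} (hp : 0 ≤ p) : p ∈ Set.range exps₂ :=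
  ⟨Finsupp.equivFunOnFinite.symm ![p.1.toNat, p.2.toNat], by
    simp [Int.toNat_of_nonneg hp.1, Int.toNat_of_nonneg hp.2]⟩

theorem mem_range_exps₃ {p : Fin 3 → ℤ} (hp : 0 ≤ p) : p ∈ Set.range exps₃ :=
  ⟨Finsupp.equivFunOnFinite.symm fun i => (p i).toNat, funext fun i => Int.toNat_of_nonneg (hp i)⟩

theorem supportedAbove_bilateral_exps₃ (f : MvPowerSeries (Fin 3) R) :
    SupportedAbove (.id (Fin 3 → ℤ)) 0 (bilateral exps₃ f) := by
  intro p hp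
  obtain ⟨d, rfl⟩ := support_bilateral_subset f hp
  exact fun i => Int.natCast_nonneg (d i)

theorem ofCoeffs_exps₁_pow {f : ℤ → R} (hf : SupportedAbove (.id ℤ) 0 f) (n : ℕ) :
    ofCoeffs exps₁ f ^ n = ofCoeffs exps₁ (pow1 f n) := by
  rw [ofCoeffs_pow exps₁_injective fun p hp => mem_range_exps₁ (hf p hp), pow1_eq_cpow]

theorem ofCoeffs_exps₂_pow {f : ℤ → ℤ → R} (hf : SupportedAbove (.id (ℤ × ℤ)) 0 (uncurry f))
    (n : ℕ) : ofCoeffs exps₂ (uncurry f) ^ n = ofCoeffs exps₂ (uncurry (pow2 f n)) := by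
  rw [ofCoeffs_pow exps₂_injective fun p hp => mem_range_exps₂ (hf p hp), uncurry_pow2]

end BilateralSeries

section Substitution

open Function MvPowerSeries

variable {R : Type*} [CommRing R] {σ τ : Type*}

theorem hasSubst_pair {A B : MvPowerSeries τ R} (hA : A.constantCoeff = 0)
    (hB : B.constantCoeff = 0) : HasSubst ![A, B] :=
  hasSubst_of_constantCoeff_zero fun s => by fin_cases s <;> simpa

theorem coeff_subst_pair {A B : MvPowerSeries τ R} (hA : A.constantCoeff = 0)
    (hB : B.constantCoeff = 0) (f : ℤ → ℤ → R) (e : τ →₀ ℕ) :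
    coeff e (subst ![A, B] (ofCoeffs exps₂ (uncurry f))) =
      ∑ᶠ p : ℕ × ℕ, f p.1 p.2 * coeff e (A ^ p.1 * B ^ p.2) := by
  rw [coeff_subst (hasSubst_pair hA hB), ← finsum_comp_equiv
    ((finTwoArrowEquiv ℕ).symm.trans Finsupp.equivFunOnFinite.symm)]
  refine finsum_congr fun p => ?_
  rw [Finsupp.prod_fintype _ _ (by simp)]
  simp

theorem coeff_subst_X_comp (ι : σ ↪ τ) (g : MvPowerSeries σ R) (d : τ →₀ ℕ)
    [Decidable (↑d.support ⊆ Set.range ι)] :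
    coeff d (subst (X ∘ ι : σ → MvPowerSeries τ R) g) =
      if ↑d.support ⊆ Set.range ι then coeff (d.comapDomain ι ι.injective.injOn) g else 0 := by
  rw [← rename_eq_subst]
  split_ifs with hd
  · conv_lhs => rw [← Finsupp.embDomain_comapDomain hd]
    exact coeff_embDomain_rename ι g _
  · refine coeff_rename_eq_zero ι g fun ⟨d', hd'⟩ => hd ?_
    subst hd'
    rw [← Finsupp.embDomain_eq_mapDomain, Finsupp.support_embDomain, Finset.coe_map]
    exact Set.image_subset_range _ _

theorem coeff_X_pow_mul_subst_X_comp {i : τ} {ι : σ ↪ τ} (hι : Set.range ι = {i}ᶜ)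
    (g : MvPowerSeries σ R) (m n : ℕ) (e : τ →₀ ℕ) :
    coeff e (X i ^ m * subst (X ∘ ι) g ^ n) =
      if e i = m then coeff (e.comapDomain ι ι.injective.injOn) (g ^ n) else 0 := by
  classical
  have hi (s : σ) : ι s ≠ i := fun h => (hι ▸ Set.mem_range_self s : ι s ∈ ({i}ᶜ : Set τ)) h
  have support_subset (d : τ →₀ ℕ) : ↑d.support ⊆ Set.range ι ↔ d i = 0 := by
    rw [hι, Set.subset_compl_singleton_iff]
    simp
  rw [X_pow_eq, coeff_monomial_mul, one_mul, ← subst_pow (.X_comp ι), coeff_subst_X_comp]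
  have comap : (e - Finsupp.single i m).comapDomain ι ι.injective.injOn =
      e.comapDomain ι ι.injective.injOn := by
    ext s
    simp [Finsupp.single_eq_of_ne (hi s)]
  simp only [support_subset, Finsupp.single_le_iff, Finsupp.tsub_apply, Finsupp.single_eq_same,
    Nat.sub_eq_zero_iff_le, comap, ← ite_and, ← le_antisymm_iff, eq_comm (a := m)]

theorem coeff_subst_X_subst_X_comp (f : ℤ → ℤ → R) {i : τ} {ι : σ ↪ τ}
    (hι : Set.range ι = {i}ᶜ) {g : MvPowerSeries σ R} (hg : g.constantCoeff = 0) (e : τ →₀ ℕ) :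
    coeff e (subst ![X i, subst (X ∘ ι) g] (ofCoeffs exps₂ (uncurry f))) =
      ∑ᶠ n : ℕ, f (e i) n * coeff (e.comapDomain ι ι.injective.injOn) (g ^ n) := by
  rw [coeff_subst_pair (by simp) (constantCoeff_subst_eq_zero (.X_comp ι) (by simp) hg) f,
    finsum_eq_of_injective (Prod.mk_right_injective (e i))]
  · simp [coeff_X_pow_mul_subst_X_comp hι]
  · rintro ⟨m, n⟩ hmn
    have hm := right_ne_zero_of_mul hmn
    rw [coeff_X_pow_mul_subst_X_comp hι] at hm
    exact ⟨n, by rw [of_not_not fun h => hm (if_neg h)]⟩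

theorem X_comp_embFinTwo {i k : τ} (h : i ≠ k) :
    (X ∘ Embedding.embFinTwo h : Fin 2 → MvPowerSeries τ R) = ![X i, X k] := by
  funext s
  fin_cases s <;> rfl

theorem coeff_subst_X_X (f : ℤ → ℤ → R) {i k : τ} (h : i ≠ k) (d : τ →₀ ℕ)
    [Decidable (↑d.support ⊆ ({i, k} : Set τ))] :
    coeff d (subst ![X i, X k] (ofCoeffs exps₂ (uncurry f))) =
      if ↑d.support ⊆ ({i, k} : Set τ) then f (d i) (d k) else 0 := by
  classical
  have range_eq : Set.range (Embedding.embFinTwo h) = {i, k} := by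
    ext s
    simp [Fin.exists_fin_two, Embedding.embFinTwo_apply_zero, Embedding.embFinTwo_apply_one,
      eq_comm]
  simp only [← X_comp_embFinTwo h, coeff_subst_X_comp, range_eq]
  rfl

theorem coeff_subst_X_subst_X_X (f : ℤ → ℤ → R) {g : ℤ → ℤ → R}
    (hg : SupportedAbove (.id (ℤ × ℤ)) 0 (uncurry g)) (hg0 : g 0 0 = 0) {i k l : Fin 3}
    (hik : i ≠ k) (hil : i ≠ l) (hkl : k ≠ l) (e : Fin 3 →₀ ℕ) :
    coeff e (subst ![X i, subst ![X k, X l] (ofCoeffs exps₂ (uncurry g))]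
      (ofCoeffs exps₂ (uncurry f))) = ∑ᶠ n : ℕ, f (e i) n * pow2 g n (e k) (e l) := by
  have range_eq : Set.range (Embedding.embFinTwo hkl) = {i}ᶜ := by
    ext s
    simp only [Set.mem_range, Fin.exists_fin_two, Embedding.embFinTwo_apply_zero,
      Embedding.embFinTwo_apply_one, Set.mem_compl_iff, Set.mem_singleton_iff]
    lia
  rw [← X_comp_embFinTwo hkl]
  refine (coeff_subst_X_subst_X_comp f range_eq ?_ e).trans (finsum_congr fun n => ?_)
  · simpa [← coeff_zero_eq_constantCoeff_apply] using hg0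
  · rw [ofCoeffs_exps₂_pow hg, coeff_ofCoeffs]
    rfl

end Substitution

section FormalGroups

open Function MvPowerSeries

variable {R : Type*} [CommRing R]

namespace FormalGroupLaw

variable (𝓕 : FormalGroupLaw R)

theorem supportedAbove_inv : SupportedAbove (.id ℤ) 0 𝓕.inv := by
  intro n hn
  by_contra h
  have hn' : n < 0 := by simpa using h
  exact hn (𝓕.inv_supp n (by lia))

theorem constantCoeff_F : (ofCoeffs exps₂ (uncurry 𝓕.F)).constantCoeff = 0 := by
  simp [← coeff_zero_eq_constantCoeff_apply, 𝓕.F_modw]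

theorem constantCoeff_inv : (ofCoeffs exps₁ 𝓕.inv).constantCoeff = 0 := by
  simp [← coeff_zero_eq_constantCoeff_apply, 𝓕.inv_supp]

theorem subst_F_comm {τ : Type*} {A B : MvPowerSeries τ R} (hA : A.constantCoeff = 0)
    (hB : B.constantCoeff = 0) :
    subst ![A, B] (ofCoeffs exps₂ (uncurry 𝓕.F)) =
      subst ![B, A] (ofCoeffs exps₂ (uncurry 𝓕.F)) := by
  ext e
  rw [coeff_subst_pair hA hB, coeff_subst_pair hB hA, ← finsum_comp_equiv (Equiv.prodComm ℕ ℕ)]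
  exact finsum_congr fun p => by simp [𝓕.F_comm p.1, mul_comm]

/-- The one-dimensional formal group whose addition is the power series with coefficients
`𝓕.F`. -/
noncomputable def formalGroup : FormalGroup R where
  toPowerSeries := ofCoeffs exps₂ (uncurry 𝓕.F)
  zero_constantCoeff := 𝓕.constantCoeff_F
  lin_coeff_X := by simp [𝓕.F_modw]
  lin_coeff_Y := by simp [𝓕.F_comm 0, 𝓕.F_modw]
  assoc := by
    have hF0 : 𝓕.F 0 0 = 0 := by simp [𝓕.F_modw]
    rw [𝓕.subst_F_comm (constantCoeff_subst_eq_zero (hasSubst_pair (by simp) (by simp))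
      (fun s => by fin_cases s <;> simp) 𝓕.constantCoeff_F) (by simp)]
    ext e
    rw [coeff_subst_X_subst_X_X _ 𝓕.supportedAbove_F hF0 (by decide) (by decide) (by decide),
      coeff_subst_X_subst_X_X _ 𝓕.supportedAbove_F hF0 (by decide) (by decide) (by decide)]
    simp only [← 𝓕.F_assoc, 𝓕.F_comm (e 2)]

instance : 𝓕.formalGroup.IsComm where
  comm := by
    have h := 𝓕.subst_F_comm (A := X (0 : Fin 2)) (B := X 1) (by simp) (by simp)
    rwa [show (![X 0, X 1] : Fin 2 → MvPowerSeries (Fin 2) R) = X by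
      funext s; fin_cases s <;> rfl, subst_self] at h

theorem subst_X_inv : subst ![PowerSeries.X, ofCoeffs exps₁ 𝓕.inv]
    (ofCoeffs exps₂ (uncurry 𝓕.F)) = (0 : PowerSeries R) := by
  ext n
  have coeff_mul (p : ℕ × ℕ) :
      PowerSeries.coeff n (PowerSeries.X ^ p.1 * (ofCoeffs exps₁ 𝓕.inv : PowerSeries R) ^ p.2) =
        pow1 𝓕.inv p.2 (n - p.1) := by
    rw [PowerSeries.coeff_X_pow_mul', ofCoeffs_exps₁_pow 𝓕.supportedAbove_inv]
    split_ifs with h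
    · simp [PowerSeries.coeff, h]
    · by_contra hc
      have := 𝓕.le_of_pow1_inv_ne_zero (Ne.symm hc)
      lia
  have inv_eq := 𝓕.inv_eq n
  have support_subset : support (fun p : ℤ × ℕ => 𝓕.F p.1 p.2 * pow1 𝓕.inv p.2 (n - p.1)) ⊆
      Set.range (Prod.map Nat.cast id) := by
    rintro ⟨i, k⟩ hp
    obtain ⟨i, rfl⟩ := Int.eq_ofNat_of_zero_le
      (𝓕.supportedAbove_F (i, k) (left_ne_zero_of_mul hp)).1
    exact ⟨(i, k), rfl⟩
  rw [finsum_eq_of_injective (Nat.cast_injective.prodMap injective_id) support_subset] at inv_eq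
  rw [PowerSeries.coeff, coeff_subst_pair PowerSeries.constantCoeff_X 𝓕.constantCoeff_inv,
    map_zero, ← inv_eq]
  exact finsum_congr fun p => congrArg _ (coeff_mul p)

theorem subst_subst_inv {σ : Type*} {f : MvPowerSeries σ R} (hf : PowerSeries.HasSubst f) :
    subst ![f, PowerSeries.subst f (ofCoeffs exps₁ 𝓕.inv)] (ofCoeffs exps₂ (uncurry 𝓕.F)) = 0 := by
  rw [← map_zero (PowerSeries.substAlgHom (R := R) hf), ← 𝓕.subst_X_inv,
    PowerSeries.coe_substAlgHom, PowerSeries.subst, PowerSeries.subst, subst_comp_subst_apply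
      (hasSubst_pair PowerSeries.constantCoeff_X 𝓕.constantCoeff_inv) hf.const]
  congr! 2 with s
  fin_cases s
  · simp [PowerSeries.X, subst_X hf.const]
  · rfl

noncomputable instance {σ : Type*} : Neg (𝓕.formalGroup.Point σ) where
  neg x := ⟨PowerSeries.subst x.val (ofCoeffs exps₁ 𝓕.inv), by
    exact IsNilpotent_subst x.2.const (by simp [𝓕.constantCoeff_inv])⟩

noncomputable instance {σ : Type*} : AddCommGroup (𝓕.formalGroup.Point σ) where
  zsmul := zsmulRec
  neg_add_cancel x := by
    rw [add_comm]
    exact Subtype.ext (𝓕.subst_subst_inv x.2)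

theorem hasSubst_val_pair {σ : Type*} (x y : 𝓕.formalGroup.Point σ) :
    HasSubst ![x.val, y.val] :=
  hasSubst_of_constantCoeff_nilpotent fun s => by
    fin_cases s
    exacts [x.2, y.2]

theorem val_dvd_add_val_sub {σ : Type*} (x y : 𝓕.formalGroup.Point σ) :
    x.val ∣ (x + y).val - y.val := by
  have X_dvd : X 0 ∣ ofCoeffs exps₂ (uncurry 𝓕.F) - X 1 := by
    refine X_dvd_iff.mpr fun d hd => ?_
    have hd' : d = Finsupp.single 1 1 ↔ d 1 = 1 := by
      simp [Finsupp.ext_iff, Fin.forall_fin_two, hd]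
    classical
    simp [hd, 𝓕.F_comm 0, 𝓕.F_modw, coeff_X, hd']
  have hxy := 𝓕.hasSubst_val_pair x y
  have dvd := map_dvd (substAlgHom hxy) X_dvd
  rwa [map_sub, substAlgHom_X, substAlgHom_X, coe_substAlgHom] at dvd

theorem sub_val_dvd_val_sub {σ : Type*} (x y : 𝓕.formalGroup.Point σ) :
    (x - y).val ∣ x.val - y.val := by
  simpa using 𝓕.val_dvd_add_val_sub (x - y) y

theorem val_dvd_neg_val {σ : Type*} (x : 𝓕.formalGroup.Point σ) : x.val ∣ (-x).val := by
  have dvd := map_dvd (PowerSeries.substAlgHom (R := R) x.2)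
    (PowerSeries.X_dvd_iff.mpr 𝓕.constantCoeff_inv)
  rwa [PowerSeries.coe_substAlgHom, PowerSeries.subst_X x.2] at dvd

/-- The point of the formal group given by the variable `s`. -/
noncomputable def coord {σ : Type*} (s : σ) : 𝓕.formalGroup.Point σ :=
  ⟨X s, by simp [PowerSeries.HasSubst]⟩

theorem subst_X_inv_eq_Fzi :
    subst ![X 0, PowerSeries.subst (X 1) (ofCoeffs exps₁ 𝓕.inv)] (ofCoeffs exps₂ (uncurry 𝓕.F)) =
      ofCoeffs exps₂ (uncurry 𝓕.Fzi) := by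
  let ι : Unit ↪ Fin 2 := ⟨fun _ => 1, injective_of_subsingleton _⟩
  have hι : Set.range ι = {0}ᶜ := by
    ext s
    fin_cases s <;> simp [ι]
  ext e
  refine (coeff_subst_X_subst_X_comp 𝓕.F hι 𝓕.constantCoeff_inv e).trans
    (finsum_congr fun n => ?_)
  rw [ofCoeffs_exps₁_pow 𝓕.supportedAbove_inv, coeff_ofCoeffs]
  rfl

theorem sub_val {σ : Type*} (x y : 𝓕.formalGroup.Point σ) :
    (x - y).val = subst ![x.val, y.val] (ofCoeffs exps₂ (uncurry 𝓕.Fzi)) := by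
  have hX : PowerSeries.HasSubst (X 1 : MvPowerSeries (Fin 2) R) := by simp [PowerSeries.HasSubst]
  have hxy := 𝓕.hasSubst_val_pair x y
  have constantCoeff_inv_X :
      (PowerSeries.subst (X 1 : MvPowerSeries (Fin 2) R)
        (ofCoeffs exps₁ 𝓕.inv)).constantCoeff = 0 :=
    constantCoeff_subst_eq_zero hX.const (by simp) 𝓕.constantCoeff_inv
  rw [← subst_X_inv_eq_Fzi, subst_comp_subst_apply (hasSubst_pair (by simp) constantCoeff_inv_X)
    hxy, sub_eq_add_neg]
  change subst ![x.val, (-y).val] (ofCoeffs exps₂ (uncurry 𝓕.F)) = _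
  congr! 2 with s
  fin_cases s
  · simp [subst_X hxy]
  · change subst (fun _ => y.val) _ = subst _ (subst (fun _ => X 1) _)
    rw [subst_comp_subst_apply hX.const hxy]
    simp [subst_X hxy]

end FormalGroupLaw

end FormalGroups

section Extension

open Function

variable {B G H R M : Type*} [AddCommGroup B] [AddCommGroup G] [CommRing R] [AddCommGroup M]
  {j : B →+ G}

theorem exists_of_extend_ne_zero {f : B → M} {q : G} (h : extend j f 0 q ≠ 0) :
    ∃ p, j p = q := by
  by_contra hq
  exact h (extend_apply' _ _ _ hq)

theorem extend_single [DecidableEq B] [DecidableEq G] (hj : Injective j) (v : B) (a : R) :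
    extend j (Pi.single v a) 0 = Pi.single (j v) a := by
  funext q
  by_cases hq : ∃ p, j p = q
  · obtain ⟨p, rfl⟩ := hq
    simp only [hj.extend_apply, Pi.single_apply, hj.eq_iff]
  · rw [extend_apply' _ _ _ hq, Pi.zero_apply, Pi.single_eq_of_ne fun h => hq ⟨v, h.symm⟩]

protected theorem SupportedAbove.extend [AddCommGroup H] [PartialOrder H] {u : G →+ H} {L : H}
    {f : B → M} (hj : Injective j) (hf : SupportedAbove (u.comp j) L f) :
    SupportedAbove u L (extend j f 0) := by
  intro q hq
  obtain ⟨p, rfl⟩ := exists_of_extend_ne_zero hq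
  exact hf p (by rwa [hj.extend_apply] at hq)

variable [Module R M]

theorem conv_extend_left (hj : Injective j) (f : B → R) (g : G → M) (e : G) :
    conv (extend j f 0) g e = ∑ᶠ p, f p • g (e - j p) := by
  rw [conv_apply, finsum_eq_of_injective hj fun q hq =>
    exists_of_extend_ne_zero (left_ne_zero_of_smul hq)]
  simp only [hj.extend_apply]

theorem conv_extend_right (hj : Injective j) (f : G → R) (g : B → M) (e : G) :
    conv f (extend j g 0) e = ∑ᶠ p, f (e - j p) • g p := by
  rw [conv_apply', finsum_eq_of_injective hj fun q hq =>
    exists_of_extend_ne_zero (f := g) (right_ne_zero_of_smul hq)]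
  simp only [hj.extend_apply]

theorem conv_extend_extend (hj : Injective j) (f : B → R) (g : B → M) :
    conv (extend j f 0) (extend j g 0) = extend j (conv f g) 0 := by
  funext e
  rw [conv_extend_left hj]
  by_cases he : ∃ d, j d = e
  · obtain ⟨d, rfl⟩ := he
    simp only [← map_sub, hj.extend_apply, conv_apply]
  · rw [extend_apply' _ _ _ he]
    refine finsum_eq_zero_of_forall_eq_zero fun p => ?_
    rw [extend_apply' _ _ _ fun ⟨d, hd⟩ => he ⟨d + p, by rw [map_add, hd, sub_add_cancel]⟩,
      Pi.zero_apply, smul_zero]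

theorem IsZPowFamily.extend [DecidableEq B] [DecidableEq G] [AddCommGroup H] [PartialOrder H]
    {u : G →+ H} {l : H} {g : B → R} {P : ℤ → B → R} (hj : Injective j)
    (hP : IsZPowFamily (u.comp j) l g P) :
    IsZPowFamily u l (extend j g 0) fun m => extend j (P m) 0 where
  zero := by rw [hP.zero, extend_single hj, map_zero]
  one := by rw [hP.one]
  add m n := by rw [hP.add, conv_extend_extend hj]
  above m := (hP.above m).extend hj

end Extension

section PowerSubstitution

open Function

variable {A G H R M : Type*} [AddCommGroup A] [AddCommGroup G] [AddCommGroup H] [PartialOrder H]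
  [CommRing R] [AddCommGroup M]

/-- The series obtained from `∑ c (m, a) w ^ m x ^ a` by substituting the series `P m` for
`w ^ m` and the monomial with exponent `s a` for `x ^ a`. -/
noncomputable def substPow [Module R M] (s : A →+ G) (P : ℤ → G → R) (c : ℤ × A → M) : G → M :=
  fun q => ∑ᶠ r, P r.1 (q - s r.2) • c r

theorem substPow_single [DecidableEq A] [Module R M] (s : A →+ G) (P : ℤ → G → R) (r : ℤ × A)
    (a : M) : substPow s P (Pi.single r a) = fun q => P r.1 (q - s r.2) • a := by
  funext q
  rw [substPow, finsum_eq_single _ r fun r' hr' => by rw [Pi.single_eq_of_ne hr', smul_zero],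
    Pi.single_eq_same]

/-- The degree of `w ^ m x ^ a` when `w` has degree `l` and `x ^ a` has degree `u (s a)`; the
substitution `substPow s P` does not lower it. -/
def substDeg (u : G →+ H) (l : H) (s : A →+ G) : ℤ × A →+ H :=
  (zmultiplesHom H l).coprod (u.comp s)

namespace IsZPowFamily

variable [IsOrderedAddMonoid H] [DecidableEq G] {u : G →+ H} {l L : H} {s : A →+ G} {g : G → R}
  {P : ℤ → G → R} {c : ℤ × A → M}

theorem substDeg_le (hP : IsZPowFamily u l g P) {r : ℤ × A} {q : G} (h : P r.1 (q - s r.2) ≠ 0) :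
    substDeg u l s r ≤ u q := by
  have := hP.above _ _ h
  rwa [map_sub, le_sub_iff_add_le] at this

variable [Module R M]

theorem supportedAbove_substPow (hP : IsZPowFamily u l g P)
    (hc : SupportedAbove (substDeg u l s) L c) : SupportedAbove u L (substPow s P c) := by
  intro q hq
  obtain ⟨r, hr⟩ := exists_ne_zero_of_finsum_ne_zero' hq
  exact (hc r (right_ne_zero_of_smul hr)).trans (hP.substDeg_le (left_ne_zero_of_smul hr))

variable [LocallyFiniteOrder H]

theorem finiteBelow_substPow (hP : IsZPowFamily u l g P) (hu : Injective u)
    (hc : FiniteBelow (substDeg u l s) c) : FiniteBelow u (substPow s P c) := by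
  intro L
  refine ((hc L).biUnion fun r _ => (Set.finite_Icc (substDeg u l s r) L).preimage
    hu.injOn).subset fun q ⟨hq, hqL⟩ => ?_
  obtain ⟨r, hr⟩ := exists_ne_zero_of_finsum_ne_zero' hq
  have hrq := hP.substDeg_le (left_ne_zero_of_smul hr)
  exact Set.mem_biUnion (⟨right_ne_zero_of_smul hr, hrq.trans hqL⟩ : c r ≠ 0 ∧ _) ⟨hrq, hqL⟩

theorem finsum_smul_substPow (hP : IsZPowFamily u l g P) (hu : Injective u) {w : G → R}
    (hw : ∀ q, w q ≠ 0 → u q ≤ L) (hc : FiniteBelow (substDeg u l s) c) :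
    ∑ᶠ q, w q • substPow s P c q = ∑ᶠ r, (∑ᶠ q, w q * P r.1 (q - s r.2)) • c r := by
  refine finsum_smul_finsum_smul w _ c (((hc L).biUnion fun r _ =>
    ((Set.finite_Icc (substDeg u l s r) L).preimage hu.injOn).prod
      (Set.finite_singleton r)).subset fun x ⟨hq, hqr, hr⟩ => ?_)
  have hrq := hP.substDeg_le hqr
  exact Set.mem_biUnion (⟨hr, hrq.trans (hw _ hq)⟩ : c x.2 ≠ 0 ∧ _) ⟨⟨hrq, hw _ hq⟩, rfl⟩

theorem conv_substPow (hP : IsZPowFamily u l g P) (hu : Injective u) {D : G → R}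
    (hD : SupportedAbove u L D) (hc : FiniteBelow (substDeg u l s) c) :
    conv D (substPow s P c) = substPow s (fun m => conv D (P m)) c := by
  funext e
  have deg_le (q : G) (hq : D (e - q) ≠ 0) : u q ≤ u e - L := by
    simpa using le_sub_comm.mp (map_sub u e q ▸ hD _ hq)
  rw [conv_apply', hP.finsum_smul_substPow hu deg_le hc]
  have shift (r : ℤ × A) :
      ∑ᶠ q, D (e - q) * P r.1 (q - s r.2) = conv D (P r.1) (e - s r.2) := by
    rw [conv_apply', ← finsum_comp_equiv (Equiv.addRight (s r.2))]
    simp only [Equiv.coe_addRight, sub_add_eq_sub_sub_swap, add_sub_cancel_right, smul_eq_mul]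
  simp only [shift, substPow]

theorem conv_substPow_substPow (hP : IsZPowFamily u l g P) (hu : Injective u)
    (hs : Injective (substDeg u l s)) {f : ℤ × A → R} (hf : SupportedAbove (substDeg u l s) L f)
    (hc : FiniteBelow (substDeg u l s) c) :
    conv (substPow s P f) (substPow s P c) = substPow s P (conv f c) := by
  funext q
  have finite_triples : {x : (ℤ × A) × (ℤ × A) |
      P x.1.1 (q - s x.1.2) ≠ 0 ∧ f (x.1 - x.2) ≠ 0 ∧ c x.2 ≠ 0}.Finite := by
    refine ((hc (u q - L)).biUnion fun r _ => ((Set.finite_Icc (L + substDeg u l s r)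
      (u q)).preimage hs.injOn).prod (Set.finite_singleton r)).subset fun x ⟨hx, hfx, hr⟩ => ?_
    have hxq := hP.substDeg_le hx
    have hLx : L + substDeg u l s x.2 ≤ substDeg u l s x.1 := by
      simpa [le_sub_iff_add_le] using hf _ hfx
    exact Set.mem_biUnion (⟨hr, le_sub_iff_add_le'.mpr (hLx.trans hxq)⟩ : c x.2 ≠ 0 ∧ _)
      ⟨⟨hLx, hxq⟩, rfl⟩
  have collect := finsum_smul_finsum_smul (fun t => P t.1 (q - s t.2)) (fun t r => f (t - r)) c
    finite_triples
  simp only [← conv_apply'] at collect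
  rw [hP.conv_substPow hu (hP.supportedAbove_substPow hf) hc, substPow, substPow, collect]
  refine finsum_congr fun r => ?_
  rw [conv_comm, hP.conv_substPow hu (hP.above r.1) (hf.finiteBelow hs),
    ← finsum_comp_equiv (Equiv.addLeft r)]
  simp only [substPow, ← hP.add, Equiv.coe_addLeft, add_sub_cancel_left, smul_eq_mul,
    Prod.fst_add, Prod.snd_add, map_add, sub_sub]

end IsZPowFamily

end PowerSubstitution

section PairSubstitution

open Function AddMonoidHom

variable {A H R M : Type*} [AddCommGroup A] [DecidableEq A] [AddCommGroup H] [PartialOrder H]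
  [IsOrderedAddMonoid H] [LocallyFiniteOrder H] [CommRing R] [AddCommGroup M] [Module R M]
  {u : ℤ × A →+ H} {g g' : ℤ × A → R} {P P' : ℤ → ℤ × A → R}

theorem substDeg_inr {A H : Type*} [AddCommGroup A] [AddCommGroup H] (u : ℤ × A →+ H) :
    substDeg u (u (1, 0)) (inr ℤ A) = u := by
  refine AddMonoidHom.ext fun r => ?_
  rw [substDeg, coprod_apply, zmultiplesHom_apply, ← map_zsmul, AddMonoidHom.comp_apply, ← map_add]
  simp

namespace IsZPowFamily

theorem finiteBelow_substPow_inr (hP : IsZPowFamily u (u (1, 0)) g P) (hu : Injective u)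
    {c : ℤ × A → M} (hc : FiniteBelow u c) : FiniteBelow u (substPow (inr ℤ A) P c) :=
  hP.finiteBelow_substPow hu (by rwa [substDeg_inr])

theorem substPow_inr_substPow_inr (hu : Injective u) (hP : IsZPowFamily u (u (1, 0)) g P)
    (hP' : IsZPowFamily u (u (1, 0)) g' P') {c : ℤ × A → M} (hc : FiniteBelow u c) :
    substPow (inr ℤ A) P (substPow (inr ℤ A) P' c) =
      substPow (inr ℤ A) (fun m => substPow (inr ℤ A) P (P' m)) c := by
  funext q
  have deg_le (r : ℤ × A) (hr : P r.1 (q - inr ℤ A r.2) ≠ 0) : u r ≤ u q := by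
    simpa only [substDeg_inr] using hP.substDeg_le hr
  rw [substPow, hP'.finsum_smul_substPow hu deg_le (by rwa [substDeg_inr])]
  refine finsum_congr fun r => ?_
  rw [← finsum_comp_equiv (Equiv.addRight (inr ℤ A r.2))]
  simp only [substPow, Equiv.coe_addRight, Prod.fst_add, Prod.snd_add, inr_apply, add_zero, map_add,
    add_sub_cancel_right, sub_add_eq_sub_sub_swap, smul_eq_mul]

theorem substPow_inr (hu : Injective u) (hP : IsZPowFamily u (u (1, 0)) g P)
    (hP' : IsZPowFamily u (u (1, 0)) g' P') :
    IsZPowFamily u (u (1, 0)) (substPow (inr ℤ A) P g')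
      fun m => substPow (inr ℤ A) P (P' m) where
  zero := by
    rw [hP'.zero, substPow_single]
    simp only [hP.zero, Prod.fst_zero, Prod.snd_zero, map_zero, sub_zero, smul_eq_mul, mul_one]
  one := by rw [hP'.one]
  add m n := by
    rw [hP'.add, hP.conv_substPow_substPow hu (L := m • u (1, 0)) (by rwa [substDeg_inr])]
    · simpa only [substDeg_inr] using hP'.above m
    · simpa only [substDeg_inr] using (hP'.above n).finiteBelow hu
  above m := hP.supportedAbove_substPow (by simpa only [substDeg_inr] using hP'.above m)

end IsZPowFamily

end PairSubstitution

section Planes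

open Function AddMonoidHom

variable {B G H R M : Type*} [AddCommGroup B] [AddCommGroup G] [AddCommGroup H] [PartialOrder H]
  [IsOrderedAddMonoid H] [CommRing R] [AddCommGroup M] [Module R M]
  {j : B →+ G} {w : G →+ H} {L : H} {Δ : G → R}

theorem conv_extend_add (hj : Injective j) (Δ : G → R) (S : B → M) (e : G) (p : B) :
    conv Δ (extend j S 0) (e + j p) = conv (fun q => Δ (e + j q)) S p := by
  simp only [conv_extend_right hj, conv_apply', map_sub, add_sub_assoc]

theorem SupportedAbove.slice (hΔ : SupportedAbove w L Δ) (e : G) :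
    SupportedAbove (w.comp j) (L - w e) fun p => Δ (e + j p) := by
  intro p hp
  simpa [sub_le_iff_le_add, add_comm] using hΔ _ hp

variable [LocallyFiniteOrder H]

theorem SupportedAbove.conv_extend_conv (hΔ : SupportedAbove w L Δ) (hwj : Injective (w.comp j))
    {L' : H} {f : B → R} {S : B → M} (hf : SupportedAbove (w.comp j) L' f)
    (hS : FiniteBelow (w.comp j) S) :
    conv Δ (extend j (conv f S) 0) = conv (conv Δ (extend j f 0)) (extend j S 0) := by
  have hj : Injective j := Injective.of_comp (f := w) hwj
  funext e
  rw [← add_zero e, ← map_zero j, conv_extend_add hj, conv_extend_add hj,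
    ← (hΔ.slice e).conv_assoc hwj hf hS]
  simp only [conv_extend_add hj]

theorem SupportedAbove.conv_extend_cpow [DecidableEq B] (hΔ : SupportedAbove w L Δ)
    (hwj : Injective (w.comp j)) {L' : H} {g : B → R} (hg : SupportedAbove (w.comp j) L' g) {z : G}
    (hΔg : conv Δ (extend j g 0) = fun e => Δ (e - z)) (n : ℕ) :
    conv Δ (extend j (cpow g n) 0) = fun e => Δ (e - n • z) := by
  have hj : Injective j := Injective.of_comp (f := w) hwj
  induction n with
  | zero =>
    funext e
    rw [conv_extend_right hj, finsum_eq_single _ 0 fun p hp => by simp [cpow, hp]]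
    simp [cpow]
  | succ n ih =>
    rw [cpow, hΔ.conv_extend_conv hwj hg ((hg.cpow n).finiteBelow hwj), hΔg]
    funext e
    simp only [conv_shift_left, ih, sub_sub, succ_nsmul']

theorem SupportedAbove.conv_extend_zpow [DecidableEq B] (hΔ : SupportedAbove w L Δ)
    (hwj : Injective (w.comp j)) {l : H} {g : B → R} {P : ℤ → B → R}
    (hP : IsZPowFamily (w.comp j) l g P) {z : G}
    (hΔg : conv Δ (extend j g 0) = fun e => Δ (e - z)) (n : ℤ) :
    conv Δ (extend j (P n) 0) = fun e => Δ (e - n • z) := by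
  have hj : Injective j := Injective.of_comp (f := w) hwj
  funext e
  have shifted_above (m : ℤ) : FiniteBelow (w.comp j) fun p => Δ (e - m • z + j p) :=
    (hΔ.slice _).finiteBelow hwj
  have conv_g (m : ℤ) : conv g (fun p => Δ (e - m • z + j p)) =
      fun p => Δ (e - (m + 1) • z + j p) := by
    funext p
    rw [conv_comm, ← conv_extend_add hj, hΔg, add_smul, one_smul]
    abel_nf
  have := congrFun (hP.conv_eq hwj shifted_above conv_g n 0) 0
  rw [conv_comm, ← conv_extend_add hj] at this
  simpa using this

theorem SupportedAbove.conv_extend_substPow {A : Type*} [AddCommGroup A] [DecidableEq A]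
    {j : ℤ × A →+ G} (hΔ : SupportedAbove w L Δ)
    (hwj : Injective (w.comp j)) {g : ℤ × A → R} {P : ℤ → ℤ × A → R}
    (hP : IsZPowFamily (w.comp j) (w.comp j (1, 0)) g P) {z : G}
    (hΔg : conv Δ (extend j g 0) = fun e => Δ (e - z)) {c : ℤ × A → M}
    (hc : FiniteBelow (w.comp j) c)
    (hz : Injective ((zmultiplesHom G z).coprod (j.comp (inr ℤ A)))) :
    conv Δ (extend j (substPow (inr ℤ A) P c) 0) =
      conv Δ (extend ((zmultiplesHom G z).coprod (j.comp (inr ℤ A))) c 0) := by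
  have hj : Injective j := Injective.of_comp (f := w) hwj
  funext e
  have deg_le (q : ℤ × A) (hq : Δ (e - j q) ≠ 0) : w.comp j q ≤ w e - L := by
    simpa using le_sub_comm.mp (map_sub w e (j q) ▸ hΔ _ hq)
  rw [conv_extend_right hj, conv_extend_right hz,
    hP.finsum_smul_substPow hwj deg_le (by rwa [substDeg_inr])]
  refine finsum_congr fun r => congrArg (· • c r) ?_
  have := congrFun (hΔ.conv_extend_zpow hwj hP hΔg r.1) (e - j (inr ℤ A r.2))
  rw [conv_extend_right hj] at this
  rw [← finsum_comp_equiv (Equiv.addRight (inr ℤ A r.2))]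
  simpa [sub_sub, add_comm] using this

end Planes

section CoordinatePlanes

open Function AddMonoidHom

/-- The exponents in all variables, seen through the total degree and the degree in the
variable `k`. -/
def degAt {ι : Type*} [Fintype ι] (k : ι) : (ι → ℤ) →+ ℤ × ℤ :=
  (∑ i, Pi.evalAddMonoidHom (fun _ => ℤ) i).prod (Pi.evalAddMonoidHom _ k)

theorem degAt_apply {ι : Type*} [Fintype ι] (k : ι) (e : ι → ℤ) : degAt k e = (∑ i, e i, e k) := by
  simp [degAt]

variable {ι R M : Type*} [DecidableEq ι] [CommRing R] [AddCommGroup M]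

/-- The exponents of the series in the two variables `i` and `k`, as exponents in all variables. -/
def plane (i k : ι) : ℤ × ℤ →+ (ι → ℤ) :=
  (AddMonoidHom.single (fun _ => ℤ) i).coprod (.single (fun _ => ℤ) k)

theorem plane_apply (i k : ι) (p : ℤ × ℤ) : plane i k p = Pi.single i p.1 + Pi.single k p.2 := rfl

theorem plane_injective {i k : ι} (h : i ≠ k) : Injective (plane i k) := by
  intro p q hpq
  have hi := congrFun hpq i
  have hk := congrFun hpq k
  simp only [plane_apply, Pi.add_apply, Pi.single_eq_same, Pi.single_eq_of_ne h,
    Pi.single_eq_of_ne h.symm, add_zero, zero_add] at hi hk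
  exact Prod.ext hi hk

theorem plane_monotone (i k : ι) : Monotone (plane i k) := fun _ _ h =>
  add_le_add (Pi.single_mono i h.1) (Pi.single_mono k h.2)

theorem extend_plane_swap {i k : ι} (h : i ≠ k) (S : ℤ × ℤ → M) :
    extend (plane i k) (S ∘ Prod.swap) 0 = extend (plane k i) S 0 := by
  have plane_swap (p : ℤ × ℤ) : plane i k p = plane k i p.swap := add_comm _ _
  funext q
  by_cases hq : ∃ p, plane k i p = q
  · obtain ⟨p, rfl⟩ := hq
    rw [(plane_injective h.symm).extend_apply, ← Prod.swap_swap p, ← plane_swap,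
      (plane_injective h).extend_apply]
    rfl
  · rw [extend_apply' _ _ _ hq, extend_apply' _ _ _ fun ⟨p, hp⟩ => hq ⟨p.swap, plane_swap p ▸ hp⟩]

variable [Fintype ι]

theorem degAt_comp_plane_right {i k : ι} (h : i ≠ k) : (degAt k).comp (plane i k) = degSnd := by
  refine AddMonoidHom.ext fun p => ?_
  simp [degAt_apply, plane_apply, Finset.sum_add_distrib, h.symm]

theorem degAt_comp_plane_left {i k : ι} (h : i ≠ k) : (degAt i).comp (plane i k) = degFst := by
  refine AddMonoidHom.ext fun p => ?_
  simp [degAt_apply, plane_apply, Finset.sum_add_distrib, h]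

variable [Module R M] {Δ : (ι → ℤ) → R} {L : ℤ × ℤ}

theorem SupportedAbove.conv_extend_plane_substPow {i k s : ι}
    (hΔ : SupportedAbove (degAt k) L Δ) (hik : i ≠ k) (hsk : s ≠ k) {g : ℤ × ℤ → R}
    {P : ℤ → ℤ × ℤ → R} (hP : IsZPowFamily degSnd (1, 0) g P)
    (hΔg : conv Δ (extend (plane i k) g 0) = fun e => Δ (e - Pi.single s 1)) {c : ℤ × ℤ → M}
    (hc : FiniteBelow degSnd c) :
    conv Δ (extend (plane i k) (substPow (inr ℤ ℤ) P c) 0) = conv Δ (extend (plane s k) c 0) := by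
  have plane_eq : (zmultiplesHom _ (Pi.single s 1)).coprod ((plane i k).comp (inr ℤ ℤ)) =
      plane s k := by
    refine AddMonoidHom.ext fun p => ?_
    simp [plane_apply, ← Pi.single_smul]
  have hdeg := degAt_comp_plane_right hik
  have h := hΔ.conv_extend_substPow (hdeg ▸ degSnd_injective) (by rwa [hdeg]) hΔg (by rwa [hdeg])
    (plane_eq ▸ plane_injective hsk)
  rwa [plane_eq] at h

end CoordinatePlanes

section ClearedSeries

open Function

variable {B G H R M : Type*} [AddCommGroup B] [DecidableEq B] [AddCommGroup G] [AddCommGroup H]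
  [PartialOrder H] [IsOrderedAddMonoid H] [LocallyFiniteOrder H] [CommRing R] [AddCommGroup M]
  [Module R M]

/-- The series `z ^ (-N) g ^ N S`, for series `g` and `S` with exponents in `B`. It can replace
`S` in the product with any series `Δ` satisfying `Δ g = Δ z`. -/
noncomputable def cleared (j : B →+ G) (z : G) (g : B → R) (N : ℕ) (S : B → M) : G → M :=
  fun q => extend j (conv (cpow g N) S) 0 (q + N • z)

theorem SupportedAbove.conv_cleared {j : B →+ G} {w : G →+ H} {L L' : H} {Δ : G → R}
    {g : B → R} {S : B → M} (hΔ : SupportedAbove w L Δ) (hwj : Injective (w.comp j))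
    (hg : SupportedAbove (w.comp j) L' g) {z : G}
    (hΔg : conv Δ (extend j g 0) = fun e => Δ (e - z)) (hS : FiniteBelow (w.comp j) S) (N : ℕ) :
    conv Δ (cleared j z g N S) = conv Δ (extend j S 0) := by
  funext e
  have shift := conv_shift_right Δ (extend j (conv (cpow g N) S) 0) (-(N • z)) e
  simp only [sub_neg_eq_add] at shift
  rw [show cleared j z g N S = fun q => extend j (conv (cpow g N) S) 0 (q + N • z) from rfl, shift,
    hΔ.conv_extend_conv hwj (hg.cpow N) hS, hΔ.conv_extend_cpow hwj hg hΔg, conv_shift_left,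
    add_sub_cancel_right]

theorem supportedAbove_cleared_plane {ι : Type*} [DecidableEq ι] {i k : ι} (h : i ≠ k)
    {z : ι → ℤ} {g : ℤ × ℤ → R} {N : ℕ} {S : ℤ × ℤ → M} {L : ℤ × ℤ}
    (hS : SupportedAbove (.id (ℤ × ℤ)) L (conv (cpow g N) S)) :
    SupportedAbove (.id (ι → ℤ)) (plane i k L - N • z) (cleared (plane i k) z g N S) := by
  have above_plane : SupportedAbove (plane i k) (plane i k L) (conv (cpow g N) S) :=
    hS.map (plane_monotone i k)
  intro q hq
  exact sub_le_iff_le_add.mpr (above_plane.extend (u := .id _) (plane_injective h) _ hq)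

end ClearedSeries

section NestedSeries

open Function

variable {R : Type*} [CommRing R] {i k l : Fin 3}

/-- The substitution of the powers `P m` of a series in the variables `k` and `l` for those of the
second variable of `Q`, whose first variable becomes the variable `i`. -/
noncomputable def nested (i k l : Fin 3) (Q : ℤ → ℤ → R) (P : ℤ → ℤ → ℤ → R) : (Fin 3 → ℤ) → R :=
  fun e => ∑ᶠ m : ℤ, Q (e i) m * P m (e k) (e l)

theorem nested_eq_substPow (hik : i ≠ k) (hil : i ≠ l) (hkl : k ≠ l) (Q : ℤ → ℤ → R)
    (P : ℤ → ℤ → ℤ → R) :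
    nested i k l Q P = substPow (AddMonoidHom.single (fun _ => ℤ) i)
      (fun m => extend (plane k l) (uncurry (P m)) 0) fun r => Q r.2 r.1 := by
  funext e
  have sub_single : e - Pi.single i (e i) = plane k l (e k, e l) := by
    funext s
    obtain rfl | rfl | rfl : s = i ∨ s = k ∨ s = l := by lia
    all_goals simp [plane_apply, *, Ne.symm]
  rw [substPow, finsum_eq_of_injective (g := fun m : ℤ => (m, e i))]
  · refine finsum_congr fun m => ?_
    simp only [AddMonoidHom.single_apply, sub_single, (plane_injective hkl).extend_apply, uncurry,
      smul_eq_mul, mul_comm]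
  · exact Prod.mk_left_injective _
  · rintro ⟨m, a⟩ hr
    obtain ⟨p, hp⟩ := exists_of_extend_ne_zero (left_ne_zero_of_smul hr)
    have hpi := congrFun hp i
    simp only [plane_apply, AddMonoidHom.single_apply, Pi.add_apply, Pi.sub_apply,
      Pi.single_eq_same, Pi.single_eq_of_ne hik, Pi.single_eq_of_ne hil] at hpi
    exact ⟨m, Prod.ext rfl (by lia)⟩

theorem conv_comp_swap (f g : ℤ × ℤ → R) :
    conv (f ∘ Prod.swap) (g ∘ Prod.swap) = conv f g ∘ Prod.swap := by
  funext p
  rw [comp_apply, conv_apply, conv_apply, ← finsum_comp_equiv (Equiv.prodComm ℤ ℤ)]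
  rfl

/-- The exponents of `nested i k l Q P`, where `v` and `ρ` are the degrees in which the outer
powers `Q` and the inner powers `P` are expanded. -/
def nestedDeg (i k l : Fin 3) (v ρ : ℤ × ℤ →+ ℤ × ℤ) : (Fin 3 → ℤ) →+ (ℤ × ℤ) × ℤ :=
  let inner := ρ.comp ((Pi.evalAddMonoidHom (fun _ => ℤ) k).prod (Pi.evalAddMonoidHom _ l))
  (v.comp ((Pi.evalAddMonoidHom _ i).prod ((AddMonoidHom.fst ℤ ℤ).comp inner))).prod
    ((AddMonoidHom.snd ℤ ℤ).comp inner)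

section NestedDegree

variable {v ρ : ℤ × ℤ →+ ℤ × ℤ}

theorem nestedDeg_apply (e : Fin 3 → ℤ) :
    nestedDeg i k l v ρ e = (v (e i, (ρ (e k, e l)).1), (ρ (e k, e l)).2) := rfl

variable (hik : i ≠ k) (hil : i ≠ l) (hkl : k ≠ l)
include hik hil

theorem substDeg_nestedDeg (r : ℤ × ℤ) :
    substDeg (nestedDeg i k l v ρ) (v (0, 1), 0) (.single (fun _ => ℤ) i) r = (v r.swap, 0) := by
  have hv : v r.swap = r.1 • v (0, 1) + v (r.2, 0) := by
    rw [← map_zsmul, ← map_add]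
    simp [Prod.swap]
  have hρ : ρ (0, 0) = 0 := map_zero ρ
  simp [substDeg, nestedDeg_apply, hik.symm, hil.symm, hv, hρ]

theorem substDeg_nestedDeg_injective (hv : Injective v) :
    Injective (substDeg (nestedDeg i k l v ρ) (v (0, 1), 0) (.single (fun _ => ℤ) i)) := by
  intro r r' h
  rw [substDeg_nestedDeg hik hil, substDeg_nestedDeg hik hil, Prod.mk.injEq, hv.eq_iff,
    Prod.swap_inj] at h
  exact h.1

include hkl

theorem nestedDeg_injective (hv : Injective v) (hρ : Injective ρ) :
    Injective (nestedDeg i k l v ρ) := by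
  intro e e' h
  rw [nestedDeg_apply, nestedDeg_apply, Prod.mk.injEq, hv.eq_iff, Prod.mk.injEq] at h
  obtain ⟨hk, hl⟩ := Prod.ext_iff.mp (hρ (Prod.ext h.1.2 h.2))
  funext s
  obtain rfl | rfl | rfl : s = i ∨ s = k ∨ s = l := by lia
  exacts [h.1.1, hk, hl]

theorem isZPowFamily_extend_plane (hv : Monotone v) {g : ℤ × ℤ → R} {P : ℤ → ℤ → ℤ → R}
    (hP : IsZPowFamily ρ (1, 0) g fun n => uncurry (P n)) :
    IsZPowFamily (nestedDeg i k l v ρ) (v (0, 1), 0) (extend (plane k l) g 0)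
      fun m => extend (plane k l) (uncurry (P m)) 0 := by
  let π : ℤ × ℤ →+ (ℤ × ℤ) × ℤ := (v.comp (.inr ℤ ℤ)).prodMap (.id ℤ)
  have hπ : Monotone π := fun x y h => ⟨hv ⟨le_rfl, h.1⟩, h.2⟩
  refine IsZPowFamily.extend (plane_injective hkl) ?_
  convert hP.map π hπ using 1
  · refine AddMonoidHom.ext fun p => ?_
    change nestedDeg i k l v ρ (plane k l p) = (v (0, (ρ p).1), (ρ p).2)
    simp [nestedDeg_apply, plane_apply, hik, hil, hkl, hkl.symm]
  · rfl

theorem conv_nested_nested (hv : Injective v) (hv' : Monotone v) (hρ : Injective ρ)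
    {f g : ℤ × ℤ → R} {Q P : ℤ → ℤ → ℤ → R}
    (hQ : IsZPowFamily v (1, 0) f fun n => uncurry (Q n))
    (hP : IsZPowFamily ρ (1, 0) g fun n => uncurry (P n)) (m n : ℤ) :
    conv (nested i k l (Q m) P) (nested i k l (Q n) P) = nested i k l (Q (m + n)) P := by
  have hs := substDeg_nestedDeg_injective (ρ := ρ) hik hil hv
  have above (n : ℤ) : SupportedAbove
      (substDeg (nestedDeg i k l v ρ) (v (0, 1), 0) (.single (fun _ => ℤ) i))
      (n • (1, 0), 0) (uncurry (Q n) ∘ Prod.swap) := by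
    intro r hr
    rw [substDeg_nestedDeg hik hil]
    exact ⟨hQ.above n r.swap hr, le_rfl⟩
  simp only [nested_eq_substPow hik hil hkl]
  exact ((isZPowFamily_extend_plane hik hil hkl hv' hP).conv_substPow_substPow
    (nestedDeg_injective hik hil hkl hv hρ) hs (above m) ((above n).finiteBelow hs)).trans
    (by rw [conv_comp_swap, ← hQ.add]; rfl)

end NestedDegree

end NestedSeries

section Expansions

open Function

variable {ι R M : Type*} [Fintype ι] [DecidableEq ι] [CommRing R] [AddCommGroup M]

/-- The exponents in all variables, with the degree in the variable `i` replaced by the total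
degree; series which are `SupportedAbove (totalAt i)` are expanded with the variable `i` as the
largest one. -/
def totalAt (i : ι) : (ι → ℤ) →+ (ι → ℤ) :=
  AddMonoidHom.mk' (fun e => update e i (∑ s, e s)) fun a b => by
    rw [← update_add]
    simp [Finset.sum_add_distrib]

theorem totalAt_apply (i : ι) (e : ι → ℤ) : totalAt i e = update e i (∑ s, e s) := rfl

theorem totalAt_monotone (i : ι) : Monotone (totalAt i) := fun _ _ h =>
  update_le_update_iff.mpr ⟨Finset.sum_le_sum fun s _ => h s, fun s _ => h s⟩

theorem totalAt_injective (i : ι) : Injective (totalAt i) := by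
  refine (injective_iff_map_eq_zero _).mpr fun e he => ?_
  have off (s : ι) (hs : s ≠ i) : e s = 0 := by simpa [totalAt_apply, hs] using congrFun he s
  have total : ∑ s, e s = 0 := by simpa [totalAt_apply] using congrFun he i
  rw [Finset.sum_eq_single i (fun s _ hs => off s hs) (by simp)] at total
  funext s
  rcases eq_or_ne s i with rfl | hs
  exacts [total, off s hs]

theorem SupportedAbove.map_totalAt {L : ι → ℤ} {f : (ι → ℤ) → M}
    (hf : SupportedAbove (.id (ι → ℤ)) L f) (i : ι) :
    SupportedAbove (totalAt i) (totalAt i L) f :=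
  hf.map (totalAt_monotone i)

theorem SupportedAbove.finiteBelow_totalAt {L : ι → ℤ} {f : (ι → ℤ) → M}
    (hf : SupportedAbove (.id (ι → ℤ)) L f) (i : ι) : FiniteBelow (totalAt i) f :=
  (hf.map_totalAt i).finiteBelow (totalAt_injective i)

theorem SupportedAbove.degAt_of_totalAt {i k : ι} (h : k ≠ i) {L : ι → ℤ} {f : (ι → ℤ) → M}
    (hf : SupportedAbove (totalAt i) L f) : SupportedAbove (degAt k) (L i, L k) f := by
  intro e he
  have hL := hf e he
  rw [degAt_apply]
  exact ⟨by simpa [totalAt_apply] using hL i, by simpa [totalAt_apply, h] using hL k⟩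

theorem SupportedAbove.of_totalAt_of_totalAt {i j : ι} (h : i ≠ j) {L L' : ι → ℤ}
    {f : (ι → ℤ) → M} (hi : SupportedAbove (totalAt i) L f)
    (hj : SupportedAbove (totalAt j) L' f) :
    SupportedAbove (.id (ι → ℤ)) (update L i (L' i)) f := by
  intro e he
  refine update_le_iff.mpr ⟨by simpa [totalAt_apply, h] using hj e he i, fun s hs => ?_⟩
  simpa [totalAt_apply, hs] using hi e he s

/-- `E` is the inverse of the series `f`, expanded with the variable `i` as the largest one. -/
structure IsExpansion (f : (ι → ℤ) → R) (i : ι) (E : (ι → ℤ) → R) : Prop where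
  conv_eq : conv f E = Pi.single 0 1
  above : ∃ L, SupportedAbove (totalAt i) L E

namespace IsExpansion

variable [Module R M] {f E E' : (ι → ℤ) → R} {i j k : ι} {L : ι → ℤ}

theorem exists_supportedAbove_sub (hE : IsExpansion f i E) (hE' : IsExpansion f j E')
    (hi : k ≠ i) (hj : k ≠ j) : ∃ L, SupportedAbove (degAt k) L (E - E') := by
  obtain ⟨L, hL⟩ := hE.above
  obtain ⟨L', hL'⟩ := hE'.above
  exact ⟨_, (hL.degAt_of_totalAt hi).sub (hL'.degAt_of_totalAt hj)⟩

theorem conv_sub (hE : IsExpansion f i E) (hE' : IsExpansion f j E') {W : (ι → ℤ) → M}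
    (hW : SupportedAbove (.id (ι → ℤ)) L W) :
    conv (E - E') W = conv E W - conv E' W := by
  obtain ⟨_, hL⟩ := hE.above
  obtain ⟨_, hL'⟩ := hE'.above
  exact hL.conv_sub_left (hW.finiteBelow_totalAt i) hL' (hW.finiteBelow_totalAt j)

variable (hf : SupportedAbove (.id (ι → ℤ)) 0 f)
include hf

theorem conv_conv (hE : IsExpansion f i E) {W : (ι → ℤ) → M}
    (hW : FiniteBelow (totalAt i) W) : conv E (conv f W) = W := by
  obtain ⟨_, hL⟩ := hE.above
  rw [← hL.conv_assoc (totalAt_injective i) (hf.map_totalAt i) hW, conv_comm, hE.conv_eq,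
    conv_one_left]

theorem conv_conv' (hE : IsExpansion f i E) {W : (ι → ℤ) → M}
    (hW : FiniteBelow (totalAt i) W) : conv f (conv E W) = W := by
  obtain ⟨_, hL⟩ := hE.above
  rw [← (hf.map_totalAt i).conv_assoc (totalAt_injective i) hL hW, hE.conv_eq, conv_one_left]

theorem eq (hE : IsExpansion f i E) (hE' : IsExpansion f i E') : E = E' := by
  obtain ⟨_, hL⟩ := hE.above
  rw [← hE'.conv_conv hf (hL.finiteBelow (totalAt_injective i)), hE.conv_eq, conv_comm,
    conv_one_left]

theorem conv_eq_of_conv_eq {E₁ E₂ E₃ : (ι → ℤ) → R} (hij : i ≠ j) (h₁ : IsExpansion f i E₁)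
    (h₂ : IsExpansion f j E₂) (h₃ : IsExpansion f k E₃) {W : (ι → ℤ) → M}
    (hW : SupportedAbove (.id (ι → ℤ)) L W) (h : conv E₁ W = conv E₂ W) :
    conv E₃ W = conv E₁ W := by
  obtain ⟨_, hL₁⟩ := h₁.above
  obtain ⟨_, hL₂⟩ := h₂.above
  have bounded := (hL₁.conv (hW.map_totalAt i)).of_totalAt_of_totalAt hij
    (h ▸ hL₂.conv (hW.map_totalAt j))
  have := h₃.conv_conv hf (bounded.finiteBelow_totalAt k)
  rwa [h₁.conv_conv' hf (hW.finiteBelow_totalAt i)] at this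

theorem conv_sub_sub_conv_sub {E₁ E₂ E₃ : (ι → ℤ) → R} (hij : i ≠ j) (h₁ : IsExpansion f i E₁)
    (h₂ : IsExpansion f j E₂) (h₃ : IsExpansion f k E₃) {X Q : (ι → ℤ) → M} {L' : ι → ℤ}
    (hX : SupportedAbove (.id (ι → ℤ)) L X) (hQ : SupportedAbove (.id (ι → ℤ)) L' Q)
    (h : conv (E₁ - E₂) X = conv (E₁ - E₂) Q) :
    conv (E₃ - E₂) X - conv (E₃ - E₁) Q = conv (E₁ - E₂) X := by
  have conv_diff {n : ι} {E : (ι → ℤ) → R} (hE : IsExpansion f n E) :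
      conv E (X - Q) = conv E X - conv E Q := by
    obtain ⟨_, hL⟩ := hE.above
    exact hL.conv_sub_right (hX.finiteBelow_totalAt n) (hQ.finiteBelow_totalAt n)
  rw [h₁.conv_sub h₂ hX, h₁.conv_sub h₂ hQ] at h
  have h₁₂ : conv E₁ (X - Q) = conv E₂ (X - Q) := by
    rw [conv_diff h₁, conv_diff h₂, sub_eq_sub_iff_sub_eq_sub]
    exact h
  have h₃₁ := h₁.conv_eq_of_conv_eq hf hij h₂ h₃ (hX.sub hQ) h₁₂
  rw [conv_diff h₃, conv_diff h₁] at h₃₁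
  rw [h₃.conv_sub h₂ hX, h₃.conv_sub h₁ hQ, h₁.conv_sub h₂ hX, sub_sub_sub_comm, h₃₁]
  abel

end IsExpansion

end Expansions

namespace IsExpansion

open MvPowerSeries

variable {R : Type*} [CommRing R] {φ ψ A : MvPowerSeries (Fin 3) R} {i j s : Fin 3}
  {E E' : (Fin 3 → ℤ) → R}

theorem conv_bilateral (hE : IsExpansion (bilateral exps₃ φ) i E) (h : A - X s = φ * ψ) :
    conv E (bilateral exps₃ A) = bilateral exps₃ ψ + fun e => E (e - Pi.single s 1) := by
  have above (f : MvPowerSeries (Fin 3) R) := supportedAbove_bilateral_exps₃ f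
  have bilateral_X : bilateral exps₃ (X s : MvPowerSeries (Fin 3) R) =
      Pi.single (Pi.single s 1) 1 := by
    have exps₃_single : exps₃ (Finsupp.single s 1) = Pi.single s 1 := by
      funext t
      simp [Finsupp.single_apply, Pi.single_apply, eq_comm]
    rw [X, bilateral_monomial exps₃_injective, exps₃_single]
  have conv_X : conv E (bilateral exps₃ (X s)) = fun e => E (e - Pi.single s 1) := by
    funext e
    rw [conv_comm, bilateral_X, conv_single_left, one_smul]
  obtain ⟨_, hL⟩ := hE.above
  have hE_fin := hL.finiteBelow (totalAt_injective i)
  calc conv E (bilateral exps₃ A)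
      = conv (bilateral exps₃ A) E - conv (bilateral exps₃ (X s)) E +
          conv E (bilateral exps₃ (X s)) := by
        rw [conv_comm E, conv_comm E, sub_add_cancel]
    _ = conv (bilateral exps₃ (φ * ψ)) E + conv E (bilateral exps₃ (X s)) := by
        rw [← ((above A).map_totalAt i).conv_sub_left hE_fin ((above (X s)).map_totalAt i) hE_fin,
          ← bilateral_sub exps₃_injective, h]
    _ = bilateral exps₃ ψ + fun e => E (e - Pi.single s 1) := by
        rw [conv_X, bilateral_mul exps₃_injective, conv_comm,
          hE.conv_conv (above φ) ((above ψ).finiteBelow_totalAt i)]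

theorem conv_sub_bilateral (hE : IsExpansion (bilateral exps₃ φ) i E)
    (hE' : IsExpansion (bilateral exps₃ φ) j E') (h : φ ∣ A - X s) :
    conv (E - E') (bilateral exps₃ A) = fun e => (E - E') (e - Pi.single s 1) := by
  obtain ⟨ψ, hψ⟩ := h
  rw [hE.conv_sub hE' (supportedAbove_bilateral_exps₃ A), hE.conv_bilateral hψ,
    hE'.conv_bilateral hψ, add_sub_add_left_eq_sub]
  rfl

end IsExpansion

section Relator

open Function MvPowerSeries

variable {R : Type*} [CommRing R] {i k l : Fin 3}

theorem nested_zero (hik : i ≠ k) (hil : i ≠ l) (hkl : k ≠ l) {v ρ : ℤ × ℤ →+ ℤ × ℤ}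
    {f g : ℤ × ℤ → R} {Q P : ℤ → ℤ → ℤ → R}
    (hQ : IsZPowFamily v (1, 0) f fun n => uncurry (Q n))
    (hP : IsZPowFamily ρ (1, 0) g fun n => uncurry (P n)) :
    nested i k l (Q 0) P = Pi.single 0 1 := by
  have zero_swap : (fun r : ℤ × ℤ => Q 0 r.2 r.1) = Pi.single 0 1 := by
    funext r
    have := congrFun hQ.zero r.swap
    simpa [Pi.single_apply, Prod.ext_iff, and_comm, uncurry_def] using this
  rw [nested_eq_substPow hik hil hkl, zero_swap, substPow_single]
  funext e
  simp [show uncurry (P 0) = Pi.single 0 1 from hP.zero, extend_single (plane_injective hkl)]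

theorem bilateral_subst_X_X {f : ℤ → ℤ → R}
    (hf : SupportedAbove (.id (ℤ × ℤ)) 0 (uncurry f)) (h : i ≠ k) :
    bilateral exps₃ (subst ![X i, X k] (ofCoeffs exps₂ (uncurry f))) =
      extend (plane i k) (uncurry f) 0 := by
  classical
  have hplane := plane_injective h
  refine bilateral_eq exps₃_injective (fun q hq => mem_range_exps₃ ?_) fun d => ?_
  · obtain ⟨p, rfl⟩ := exists_of_extend_ne_zero hq
    rw [mem_support, hplane.extend_apply] at hq
    simpa using plane_monotone i k (hf p hq)
  · rw [coeff_subst_X_X f h]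
    split_ifs with hd
    · have exps₃_eq : exps₃ d = plane i k (d i, d k) := by
        funext s
        by_cases hs : s ∈ ({i, k} : Set (Fin 3))
        · rcases hs with rfl | rfl <;> simp [plane_apply, h, h.symm]
        · have hds : d s = 0 := by simpa using mt (@hd s) hs
          simp only [Set.mem_insert_iff, Set.mem_singleton_iff, not_or] at hs
          simp [plane_apply, hds, hs.1, hs.2]
      rw [exps₃_eq, hplane.extend_apply]
      rfl
    · rw [extend_apply', Pi.zero_apply]
      rintro ⟨p, hp⟩
      refine hd fun s hs => ?_
      by_contra hsik
      simp only [Set.mem_insert_iff, Set.mem_singleton_iff, not_or] at hsik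
      have hds := congrFun hp s
      simp only [plane_apply, Pi.add_apply, Pi.single_eq_of_ne hsik.1, Pi.single_eq_of_ne hsik.2,
        add_zero, exps₃_apply] at hds
      exact Finsupp.mem_support_iff.mp hs (by exact_mod_cast hds.symm)

namespace FormalGroupLaw

variable (𝓕 : FormalGroupLaw R)

theorem bilateral_coord_add_coord (h : i ≠ k) :
    bilateral exps₃ (𝓕.coord i + 𝓕.coord k).val = extend (plane i k) (uncurry 𝓕.F) 0 :=
  bilateral_subst_X_X 𝓕.supportedAbove_F h

theorem bilateral_coord_sub_coord (h : i ≠ k) :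
    bilateral exps₃ (𝓕.coord i - 𝓕.coord k).val = extend (plane i k) (uncurry 𝓕.Fzi) 0 := by
  rw [sub_val]
  exact bilateral_subst_X_X 𝓕.supportedAbove_Fzi h

/-- The formal difference `z₀ - (z₁ - z₂)` in the formal group, whose expansions are the kernels
of the three terms of the Jacobi identity. -/
noncomputable def relator : MvPowerSeries (Fin 3) R :=
  (𝓕.coord (0 : Fin 3) - (𝓕.coord 1 - 𝓕.coord 2)).val

theorem bilateral_coord_sub_eq_nested (hik : i ≠ k) (hil : i ≠ l) (hkl : k ≠ l)
    {ρ : ℤ × ℤ →+ ℤ × ℤ} {P : ℤ → ℤ → ℤ → R}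
    (hP : IsZPowFamily ρ (1, 0) (uncurry 𝓕.Fzi) fun n => uncurry (P n)) :
    bilateral exps₃ (𝓕.coord i - (𝓕.coord k - 𝓕.coord l)).val = nested i k l 𝓕.Fzi P := by
  have above_P (m : ℕ) : SupportedAbove (.id (ℤ × ℤ)) 0 (uncurry (P m)) := by
    have := 𝓕.supportedAbove_Fzi.cpow m
    rwa [← hP.natCast, nsmul_zero] at this
  have P_natCast (m : ℕ) : P m = pow2 𝓕.Fzi m := by
    have := hP.natCast m
    rw [← uncurry_pow2] at this
    exact uncurry_injective this
  refine bilateral_eq exps₃_injective (fun e he => mem_range_exps₃ ?_) fun d => ?_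
  · obtain ⟨m, hm⟩ := exists_ne_zero_of_finsum_ne_zero' he
    have hi := 𝓕.supportedAbove_Fzi (e i, m) (left_ne_zero_of_mul hm)
    lift m to ℕ using hi.2
    have hkl := above_P m (e k, e l) (right_ne_zero_of_mul hm)
    intro s
    obtain rfl | rfl | rfl : s = i ∨ s = k ∨ s = l := by lia
    exacts [hi.1, hkl.1, hkl.2]
  · rw [sub_val, sub_val]
    refine (coeff_subst_X_subst_X_X _ 𝓕.supportedAbove_Fzi (by simp [Fzi_zero_right])
      hik hil hkl d).trans ?_
    rw [nested, finsum_eq_of_injective (g := ((↑) : ℕ → ℤ)) Nat.cast_injective]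
    · simp only [P_natCast, exps₃_apply]
    · intro m hm
      have hm₀ := (𝓕.supportedAbove_Fzi (d i, m) (left_ne_zero_of_mul hm)).2
      exact ⟨m.toNat, Int.toNat_of_nonneg hm₀⟩

theorem le_add_of_izwPow_Fzi_ne_zero {n a b : ℤ} (h : izwPow 𝓕.Fzi n a b ≠ 0) :
    n ≤ a + b ∧ 0 ≤ b := by
  simpa [Prod.le_def] using 𝓕.isZPowFamily_izwPow_Fzi.above n (a, b) h

theorem le_add_of_iwzPowNeg_Fzi_ne_zero {n a b : ℤ} (h : iwzPowNeg 𝓕.Fzi n a b ≠ 0) :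
    n ≤ a + b ∧ 0 ≤ a := by
  simpa [Prod.le_def] using 𝓕.isZPowFamily_iwzPowNeg_Fzi.above n (a, b) h

theorem nested_delta {P : ℤ → ℤ → ℤ → R} (hP : ∀ m a b, P m a b ≠ 0 → m ≤ a + b) :
    nested i k l 𝓕.delta P =
      nested i k l (izwPow 𝓕.Fzi (-1)) P - nested i k l (iwzPowNeg 𝓕.Fzi (-1)) P := by
  funext e
  have hfin {Q : ℤ → ℤ → R} (hQ : ∀ a m, Q a m ≠ 0 → -1 ≤ a + m) :
      HasFiniteSupport fun m => Q (e i) m * P m (e k) (e l) :=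
    (Set.finite_Icc (-1 - e i) (e k + e l)).subset fun m hm =>
      ⟨sub_le_iff_le_add'.mpr (hQ _ _ (left_ne_zero_of_mul hm)),
        hP _ _ _ (right_ne_zero_of_mul hm)⟩
  simp only [nested, delta, sub_mul, Pi.sub_apply]
  exact finsum_sub_distrib (hfin fun _ _ h => (𝓕.le_add_of_izwPow_Fzi_ne_zero h).1)
    (hfin fun _ _ h => (𝓕.le_add_of_iwzPowNeg_Fzi_ne_zero h).1)

end FormalGroupLaw

end Relator

section Kernels

open Function MvPowerSeries

variable {R : Type*} [CommRing R] {i k l : Fin 3}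

theorem degSnd_monotone : Monotone degSnd := fun _ _ h => ⟨add_le_add h.1 h.2, h.2⟩

theorem degFst_monotone : Monotone degFst := fun _ _ h => ⟨add_le_add h.1 h.2, h.1⟩

theorem sum_eq_of_ne (hik : i ≠ k) (hil : i ≠ l) (hkl : k ≠ l) (e : Fin 3 → ℤ) :
    ∑ s, e s = e i + e k + e l := by
  have univ_eq : Finset.univ = ({i, k, l} : Finset (Fin 3)) := by
    ext s
    simp only [Finset.mem_univ, Finset.mem_insert, Finset.mem_singleton, true_iff]
    lia
  rw [univ_eq, Finset.sum_insert (by simp [hik, hil]), Finset.sum_pair hkl, add_assoc]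

theorem supportedAbove_totalAt_of_neg_one_le_sum {ι : Type*} [Fintype ι] [DecidableEq ι] {i : ι}
    {f : (ι → ℤ) → R} (h : ∀ e, f e ≠ 0 → -1 ≤ ∑ s, e s ∧ ∀ s ≠ i, 0 ≤ e s) :
    SupportedAbove (totalAt i) (Pi.single i (-1)) f := by
  intro e he
  obtain ⟨total, off⟩ := h e he
  intro s
  rcases eq_or_ne s i with rfl | hs
  · simpa [totalAt_apply] using total
  · simpa [totalAt_apply, hs] using off s hs

namespace FormalGroupLaw

variable (𝓕 : FormalGroupLaw R)

theorem conv_bilateral_nested (hik : i ≠ k) (hil : i ≠ l) (hkl : k ≠ l) {v ρ : ℤ × ℤ →+ ℤ × ℤ}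
    (hv : Injective v) (hv' : Monotone v) (hρ : Injective ρ) {Q P : ℤ → ℤ → ℤ → R}
    (hQ : IsZPowFamily v (1, 0) (uncurry 𝓕.Fzi) fun n => uncurry (Q n))
    (hP : IsZPowFamily ρ (1, 0) (uncurry 𝓕.Fzi) fun n => uncurry (P n)) :
    conv (bilateral exps₃ (𝓕.coord i - (𝓕.coord k - 𝓕.coord l)).val)
      (nested i k l (Q (-1)) P) = Pi.single 0 1 := by
  rw [𝓕.bilateral_coord_sub_eq_nested hik hil hkl hP, ← uncurry_injective hQ.one,
    conv_nested_nested hik hil hkl hv hv' hρ hQ hP]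
  exact nested_zero hik hil hkl hQ hP

theorem isExpansion_nested_izwPow (hik : i ≠ k) (hil : i ≠ l) (hkl : k ≠ l)
    {ρ : ℤ × ℤ →+ ℤ × ℤ} (hρ : Injective ρ) {P : ℤ → ℤ → ℤ → R}
    (hP : IsZPowFamily ρ (1, 0) (uncurry 𝓕.Fzi) fun n => uncurry (P n))
    (hP' : ∀ m a b, P m a b ≠ 0 → m ≤ a + b) :
    IsExpansion (bilateral exps₃ (𝓕.coord i - (𝓕.coord k - 𝓕.coord l)).val) i
      (nested i k l (izwPow 𝓕.Fzi (-1)) P) where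
  conv_eq := 𝓕.conv_bilateral_nested hik hil hkl degSnd_injective degSnd_monotone hρ
    𝓕.isZPowFamily_izwPow_Fzi hP
  above := by
    refine ⟨_, supportedAbove_totalAt_of_neg_one_le_sum fun e he => ?_⟩
    obtain ⟨m, hm⟩ := exists_ne_zero_of_finsum_ne_zero' he
    have hQm := 𝓕.le_add_of_izwPow_Fzi_ne_zero (left_ne_zero_of_mul hm)
    have hPm := hP' m _ _ (right_ne_zero_of_mul hm)
    lift m to ℕ using hQm.2
    have above := 𝓕.supportedAbove_Fzi.cpow m
    rw [← hP.natCast, nsmul_zero] at above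
    have hkl₀ := above (e k, e l) (right_ne_zero_of_mul hm)
    have hk₀ : 0 ≤ e k := hkl₀.1
    have hl₀ : 0 ≤ e l := hkl₀.2
    refine ⟨by rw [sum_eq_of_ne hik hil hkl]; lia, fun s hs => ?_⟩
    obtain rfl | rfl : s = k ∨ s = l := by lia
    exacts [hk₀, hl₀]

theorem isExpansion_nested_iwzPowNeg_izwPow (hik : i ≠ k) (hil : i ≠ l) (hkl : k ≠ l) :
    IsExpansion (bilateral exps₃ (𝓕.coord i - (𝓕.coord k - 𝓕.coord l)).val) k
      (nested i k l (iwzPowNeg 𝓕.Fzi (-1)) (izwPow 𝓕.Fzi)) where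
  conv_eq := 𝓕.conv_bilateral_nested hik hil hkl degFst_injective degFst_monotone
    degSnd_injective 𝓕.isZPowFamily_iwzPowNeg_Fzi 𝓕.isZPowFamily_izwPow_Fzi
  above := by
    refine ⟨_, supportedAbove_totalAt_of_neg_one_le_sum fun e he => ?_⟩
    obtain ⟨m, hm⟩ := exists_ne_zero_of_finsum_ne_zero' he
    have hQm := 𝓕.le_add_of_iwzPowNeg_Fzi_ne_zero (left_ne_zero_of_mul hm)
    have hPm := 𝓕.le_add_of_izwPow_Fzi_ne_zero (right_ne_zero_of_mul hm)
    refine ⟨by rw [sum_eq_of_ne hik hil hkl]; lia, fun s hs => ?_⟩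
    obtain rfl | rfl : s = i ∨ s = l := by lia
    exacts [hQm.2, hPm.2]

theorem isExpansion_nested_iwzPowNeg_iwzPowNeg (hik : i ≠ k) (hil : i ≠ l) (hkl : k ≠ l) :
    IsExpansion (bilateral exps₃ (𝓕.coord i - (𝓕.coord k - 𝓕.coord l)).val) l
      (nested i k l (iwzPowNeg 𝓕.Fzi (-1)) (iwzPowNeg 𝓕.Fzi)) where
  conv_eq := 𝓕.conv_bilateral_nested hik hil hkl degFst_injective degFst_monotone
    degFst_injective 𝓕.isZPowFamily_iwzPowNeg_Fzi 𝓕.isZPowFamily_iwzPowNeg_Fzi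
  above := by
    refine ⟨_, supportedAbove_totalAt_of_neg_one_le_sum fun e he => ?_⟩
    obtain ⟨m, hm⟩ := exists_ne_zero_of_finsum_ne_zero' he
    have hQm := 𝓕.le_add_of_iwzPowNeg_Fzi_ne_zero (left_ne_zero_of_mul hm)
    have hPm := 𝓕.le_add_of_iwzPowNeg_Fzi_ne_zero (right_ne_zero_of_mul hm)
    refine ⟨by rw [sum_eq_of_ne hik hil hkl]; lia, fun s hs => ?_⟩
    obtain rfl | rfl : s = i ∨ s = k := by lia
    exacts [hQm.2, hPm.2]

/-- The inverse of `relator`, expanded with the variable `i` as the largest one. -/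
noncomputable def expansion : Fin 3 → (Fin 3 → ℤ) → R :=
  ![nested 0 1 2 (izwPow 𝓕.Fzi (-1)) (izwPow 𝓕.Fzi),
    nested 0 1 2 (iwzPowNeg 𝓕.Fzi (-1)) (izwPow 𝓕.Fzi),
    nested 0 1 2 (iwzPowNeg 𝓕.Fzi (-1)) (iwzPowNeg 𝓕.Fzi)]

theorem supportedAbove_relator :
    SupportedAbove (.id (Fin 3 → ℤ)) 0 (bilateral exps₃ 𝓕.relator) :=
  supportedAbove_bilateral_exps₃ _

theorem isExpansion_expansion (i : Fin 3) :
    IsExpansion (bilateral exps₃ 𝓕.relator) i (𝓕.expansion i) := by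
  fin_cases i
  · exact 𝓕.isExpansion_nested_izwPow (by decide) (by decide) (by decide) degSnd_injective
      𝓕.isZPowFamily_izwPow_Fzi fun _ _ _ h => (𝓕.le_add_of_izwPow_Fzi_ne_zero h).1
  · exact 𝓕.isExpansion_nested_iwzPowNeg_izwPow (by decide) (by decide) (by decide)
  · exact 𝓕.isExpansion_nested_iwzPowNeg_iwzPowNeg (by decide) (by decide) (by decide)

theorem nested_delta_izwPow :
    nested 0 1 2 𝓕.delta (izwPow 𝓕.Fzi) = 𝓕.expansion 0 - 𝓕.expansion 1 :=
  𝓕.nested_delta fun _ _ _ h => (𝓕.le_add_of_izwPow_Fzi_ne_zero h).1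

theorem nested_delta_iwzPowNeg :
    nested 0 1 2 𝓕.delta (iwzPowNeg 𝓕.Fzi) = 𝓕.expansion 0 - 𝓕.expansion 2 := by
  have le_add (m a b : ℤ) (h : iwzPowNeg 𝓕.Fzi m a b ≠ 0) : m ≤ a + b :=
    (𝓕.le_add_of_iwzPowNeg_Fzi_ne_zero h).1
  have expansion_zero := 𝓕.isExpansion_nested_izwPow (i := 0) (k := 1) (l := 2) (by decide)
    (by decide) (by decide) degFst_injective 𝓕.isZPowFamily_iwzPowNeg_Fzi le_add
  rw [𝓕.nested_delta le_add,
    expansion_zero.eq 𝓕.supportedAbove_relator (𝓕.isExpansion_expansion 0)]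
  rfl

theorem nested_delta_izwPow_swap :
    nested 2 1 0 𝓕.delta (izwPow 𝓕.Fzi) = 𝓕.expansion 2 - 𝓕.expansion 1 := by
  have relator_eq : 𝓕.relator = (𝓕.coord (2 : Fin 3) - (𝓕.coord 1 - 𝓕.coord 0)).val := by
    rw [relator]
    congr 1
    abel
  have le_add (m a b : ℤ) (h : izwPow 𝓕.Fzi m a b ≠ 0) : m ≤ a + b :=
    (𝓕.le_add_of_izwPow_Fzi_ne_zero h).1
  have expansion_two := 𝓕.isExpansion_nested_izwPow (i := 2) (k := 1) (l := 0) (by decide)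
    (by decide) (by decide) degSnd_injective 𝓕.isZPowFamily_izwPow_Fzi le_add
  have expansion_one := 𝓕.isExpansion_nested_iwzPowNeg_izwPow (i := 2) (k := 1) (l := 0)
    (by decide) (by decide) (by decide)
  rw [← relator_eq] at expansion_two expansion_one
  rw [𝓕.nested_delta le_add,
    expansion_two.eq 𝓕.supportedAbove_relator (𝓕.isExpansion_expansion 2),
    expansion_one.eq 𝓕.supportedAbove_relator (𝓕.isExpansion_expansion 1)]

theorem conv_expansion_sub_F (i j : Fin 3) :
    conv (𝓕.expansion i - 𝓕.expansion j) (extend (plane 0 2) (uncurry 𝓕.F) 0) =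
      fun e => (𝓕.expansion i - 𝓕.expansion j) (e - Pi.single 1 1) := by
  rw [← 𝓕.bilateral_coord_add_coord (by decide)]
  refine (𝓕.isExpansion_expansion i).conv_sub_bilateral (𝓕.isExpansion_expansion j) ?_
  have dvd := 𝓕.sub_val_dvd_val_sub (𝓕.coord (0 : Fin 3) + 𝓕.coord 2) (𝓕.coord 1)
  rwa [add_sub_right_comm, sub_add] at dvd

theorem conv_expansion_sub_Fzi (i j : Fin 3) :
    conv (𝓕.expansion i - 𝓕.expansion j) (extend (plane 1 0) (uncurry 𝓕.Fzi) 0) =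
      fun e => (𝓕.expansion i - 𝓕.expansion j) (e - Pi.single 2 1) := by
  rw [← 𝓕.bilateral_coord_sub_coord (by decide)]
  refine (𝓕.isExpansion_expansion i).conv_sub_bilateral (𝓕.isExpansion_expansion j) ?_
  have dvd := 𝓕.sub_val_dvd_val_sub (𝓕.coord (1 : Fin 3) - 𝓕.coord 0) (𝓕.coord 2)
  rw [sub_right_comm, ← neg_sub] at dvd
  exact (𝓕.val_dvd_neg_val _).trans dvd

end FormalGroupLaw

end Kernels

section InverseSubstitution

open Function AddMonoidHom

namespace FormalGroupLaw

variable {R M : Type*} [CommRing R] [AddCommGroup M] [Module R M] (𝓕 : FormalGroupLaw R)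

theorem le_of_iotaPow_ne_zero {m n : ℤ} (h : iotaPow 𝓕.inv m n ≠ 0) : m ≤ n := by
  simpa using 𝓕.isZPowFamily_iotaPow.above m n h

theorem le_add_of_izwPow_F_ne_zero {m a b : ℤ} (h : izwPow 𝓕.F m a b ≠ 0) :
    m ≤ a + b ∧ 0 ≤ b := by
  simpa [degSnd, Prod.le_def] using 𝓕.isZPowFamily_izwPow_F.above m (a, b) h

theorem isZPowFamily_extend_iotaPow {u : ℤ × ℤ →+ ℤ × ℤ} (hu : Monotone u) :
    IsZPowFamily u (u (1, 0)) (extend (inl ℤ ℤ) 𝓕.inv 0)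
      fun m => extend (inl ℤ ℤ) (iotaPow 𝓕.inv m) 0 := by
  have inl_monotone : Monotone (inl ℤ ℤ) := fun _ _ h => ⟨h, le_rfl⟩
  exact IsZPowFamily.extend (Prod.mk_left_injective 0)
    (𝓕.isZPowFamily_iotaPow.map (u.comp (inl ℤ ℤ)) (hu.comp inl_monotone))

/-- The series obtained from the series `c` in `z` and `w` by substituting `ι(z)` for `z`. -/
noncomputable def invSubst (c : ℤ × ℤ → M) : ℤ × ℤ → M :=
  substPow (inr ℤ ℤ) (fun m => extend (inl ℤ ℤ) (iotaPow 𝓕.inv m) 0) c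

theorem invSubst_apply (c : ℤ × ℤ → M) (k l : ℤ) :
    𝓕.invSubst c (k, l) = ∑ᶠ q, iotaPow 𝓕.inv q k • c (q, l) := by
  have inl_injective : Injective (inl ℤ ℤ) := Prod.mk_left_injective 0
  rw [invSubst, substPow, finsum_eq_of_injective (Prod.mk_left_injective l)]
  · refine finsum_congr fun q => ?_
    have index_eq : (k, l) - inr ℤ ℤ l = inl ℤ ℤ k := by simp
    rw [index_eq, inl_injective.extend_apply]
  · intro r hr
    obtain ⟨_, ht⟩ := exists_of_extend_ne_zero (left_ne_zero_of_smul hr)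
    have hl : 0 = l - r.2 := by simpa using congrArg Prod.snd ht
    exact ⟨r.1, Prod.ext rfl (sub_eq_zero.mp hl.symm)⟩

theorem invSubst_F : 𝓕.invSubst (uncurry 𝓕.F) = uncurry 𝓕.Fzi ∘ Prod.swap := by
  funext ⟨k, l⟩
  rw [invSubst_apply, finsum_eq_of_injective (Nat.cast_injective (R := ℤ))]
  · refine finsum_congr fun m => ?_
    rw [𝓕.isZPowFamily_iotaPow.natCast, ← pow1_eq_cpow, uncurry_apply_pair, 𝓕.F_comm, smul_eq_mul,
      mul_comm, Prod.swap_prod_mk]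
  · intro q hq
    have hq₀ : (0 : ℤ) ≤ q := (𝓕.supportedAbove_F (q, l) (right_ne_zero_of_smul hq)).1
    exact ⟨q.toNat, Int.toNat_of_nonneg hq₀⟩

theorem isZPowFamily_invSubst {u : ℤ × ℤ →+ ℤ × ℤ} (hu : Injective u) (hu' : Monotone u)
    {g : ℤ × ℤ → R} {P : ℤ → ℤ × ℤ → R} (hP : IsZPowFamily u (u (1, 0)) g P) :
    IsZPowFamily u (u (1, 0)) (𝓕.invSubst g) fun m => 𝓕.invSubst (P m) :=
  (𝓕.isZPowFamily_extend_iotaPow hu').substPow_inr hu hP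

theorem isZPowFamily_invSubst_izwPow :
    IsZPowFamily degSnd (1, 0) (uncurry 𝓕.Fzi ∘ Prod.swap)
      fun m => 𝓕.invSubst (uncurry (izwPow 𝓕.F m)) := by
  rw [← invSubst_F]
  exact 𝓕.isZPowFamily_invSubst degSnd_injective degSnd_monotone 𝓕.isZPowFamily_izwPow_F

theorem invSubst_cpow_F (N : ℕ) :
    𝓕.invSubst (cpow (uncurry 𝓕.F) N) = cpow (uncurry 𝓕.Fzi ∘ Prod.swap) N := by
  rw [← 𝓕.isZPowFamily_izwPow_F.natCast]
  exact 𝓕.isZPowFamily_invSubst_izwPow.natCast N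

theorem invSubst_conv {u : ℤ × ℤ →+ ℤ × ℤ} (hu : Injective u) (hu' : Monotone u) {L : ℤ × ℤ}
    {f : ℤ × ℤ → R} {c : ℤ × ℤ → M} (hf : SupportedAbove u L f) (hc : FiniteBelow u c) :
    𝓕.invSubst (conv f c) = conv (𝓕.invSubst f) (𝓕.invSubst c) :=
  ((𝓕.isZPowFamily_extend_iotaPow hu').conv_substPow_substPow hu (by rwa [substDeg_inr])
    (by rwa [substDeg_inr]) (by rwa [substDeg_inr])).symm

theorem finiteBelow_invSubst {u : ℤ × ℤ →+ ℤ × ℤ} (hu : Injective u) (hu' : Monotone u)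
    {c : ℤ × ℤ → M} (hc : FiniteBelow u c) : FiniteBelow u (𝓕.invSubst c) :=
  (𝓕.isZPowFamily_extend_iotaPow hu').finiteBelow_substPow_inr hu hc

theorem supportedAbove_invSubst {L : ℤ × ℤ} {c : ℤ × ℤ → M}
    (hc : SupportedAbove (.id (ℤ × ℤ)) L c) :
    SupportedAbove (.id (ℤ × ℤ)) L (𝓕.invSubst c) :=
  (𝓕.isZPowFamily_extend_iotaPow (u := .id _) monotone_id).supportedAbove_substPow
    (by rwa [substDeg_inr])

end FormalGroupLaw

end InverseSubstitution

section VertexOperators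

open Function AddMonoidHom

variable {R V : Type*} [CommRing R] [AddCommGroup V] [Module R V]

theorem IsLaurent.supportedAbove_fst {d : ℤ → V} (hd : IsLaurent d) (f : V →ₗ[R] ℤ → V) :
    ∃ N, SupportedAbove (fst ℤ ℤ) N fun p => f (d p.1) p.2 := by
  obtain ⟨N, hN⟩ := hd
  refine ⟨N, fun p hp => ?_⟩
  by_contra! h
  have hd₀ : d p.1 = 0 := hN _ h
  exact hp (by simp [hd₀])

theorem IsLaurent.finiteBelow_degFst {d : ℤ → V} (hd : IsLaurent d) {f : V →ₗ[R] ℤ → V}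
    (hf : ∀ v, IsLaurent (f v)) : FiniteBelow degFst fun p => f (d p.1) p.2 := by
  intro L
  obtain ⟨N, hN⟩ := hd.supportedAbove_fst f
  choose K hK using hf
  refine ((Set.finite_Icc N L.2).biUnion fun i _ => (Set.finite_singleton i).prod
    (Set.finite_Icc (K (d i)) (L.1 - i))).subset fun p ⟨hp, hpL⟩ => ?_
  have hK' : K (d p.1) ≤ p.2 := by
    by_contra! h
    exact hp (hK _ _ h)
  exact Set.mem_biUnion (⟨hN p hp, hpL.2⟩ : p.1 ∈ Set.Icc N L.2)
    ⟨rfl, hK', le_sub_iff_add_le'.mpr hpL.1⟩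

theorem FiniteBelow.comp_swap {c : ℤ × ℤ → V} (hc : FiniteBelow degFst c) :
    FiniteBelow degSnd (c ∘ Prod.swap) := by
  intro L
  refine ((hc L).preimage Prod.swap_injective.injOn).subset fun p ⟨hp, hpL⟩ => ⟨hp, ?_⟩
  simpa [add_comm] using hpL

namespace VertexFAlgebra

variable {𝓕 : FormalGroupLaw R} (A : VertexFAlgebra R 𝓕 V) (a b c : V)

/-- The coefficients of `Y(Y(a, z)b, w)c`. -/
def iterate : ℤ × ℤ → V := fun p => A.Y (A.Y a b p.1) c p.2

/-- The coefficients of `Y(a, z)Y(b, w)c`. -/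
def product : ℤ × ℤ → V := fun p => A.Y a (A.Y b c p.2) p.1

theorem supportedAbove_iterate : ∃ N, SupportedAbove (fst ℤ ℤ) N (A.iterate a b c) :=
  (A.Y_laurent a b).supportedAbove_fst (A.Y.flip c)

theorem finiteBelow_iterate : FiniteBelow degFst (A.iterate a b c) :=
  (A.Y_laurent a b).finiteBelow_degFst (f := A.Y.flip c) fun v => A.Y_laurent v c

theorem supportedAbove_product : ∃ N, SupportedAbove (snd ℤ ℤ) N (A.product a b c) := by
  obtain ⟨N, hN⟩ := (A.Y_laurent b c).supportedAbove_fst (A.Y a)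
  exact ⟨N, fun p hp => hN p.swap hp⟩

theorem finiteBelow_product : FiniteBelow degSnd (A.product a b c) :=
  ((A.Y_laurent b c).finiteBelow_degFst (A.Y_laurent a)).comp_swap

theorem uncurry_substFProd : uncurry (substFProd 𝓕 (fun v => A.Y a v) (A.Y b c)) =
    substPow (inr ℤ ℤ) (fun m => uncurry (izwPow 𝓕.F m)) (A.product a b c) := by
  funext ⟨k, n⟩
  refine finsum_congr fun r => ?_
  simp [product]

theorem exists_conv_iterate_eq : ∃ (N : ℕ) (L : ℤ × ℤ),
    conv (cpow (uncurry 𝓕.F) N) (A.iterate a b c) = conv (cpow (uncurry 𝓕.F) N)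
      (substPow (inr ℤ ℤ) (fun m => uncurry (izwPow 𝓕.F m)) (A.product a b c)) ∧
    SupportedAbove (.id (ℤ × ℤ)) L (conv (cpow (uncurry 𝓕.F) N) (A.iterate a b c)) := by
  obtain ⟨N, hN⟩ := A.weak_assoc a b c
  obtain ⟨K, hK⟩ := A.supportedAbove_iterate a b c
  obtain ⟨K', hK'⟩ := A.supportedAbove_product a b c
  have conv_eq := congrArg uncurry hN
  change conv (uncurry (pow2 𝓕.F N)) (A.iterate a b c) = conv (uncurry (pow2 𝓕.F N))
    (uncurry (substFProd 𝓕 (fun v => A.Y a v) (A.Y b c))) at conv_eq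
  rw [uncurry_pow2, uncurry_substFProd] at conv_eq
  have F_above := 𝓕.supportedAbove_F.cpow N
  have family_snd : IsZPowFamily (snd ℤ ℤ) (snd ℤ ℤ (1, 0)) (uncurry 𝓕.F)
      fun m => uncurry (izwPow 𝓕.F m) :=
    𝓕.isZPowFamily_izwPow_F.map (snd ℤ ℤ) monotone_snd
  have above_fst := (F_above.map (π := fst ℤ ℤ) monotone_fst).conv hK
  have above_snd := (F_above.map (π := snd ℤ ℤ) monotone_snd).conv
    (family_snd.supportedAbove_substPow (by rwa [substDeg_inr]))
  rw [← conv_eq] at above_snd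
  exact ⟨N, (_, _), conv_eq, fun p hp => ⟨above_fst p hp, above_snd p hp⟩⟩

theorem exists_conv_invSubst_iterate_eq : ∃ (N : ℕ) (L : ℤ × ℤ),
    conv (cpow (uncurry 𝓕.Fzi ∘ Prod.swap) N) (𝓕.invSubst (A.iterate a b c)) =
      conv (cpow (uncurry 𝓕.Fzi ∘ Prod.swap) N) (substPow (inr ℤ ℤ)
        (fun m => 𝓕.invSubst (uncurry (izwPow 𝓕.F m))) (A.product a b c)) ∧
    SupportedAbove (.id (ℤ × ℤ)) L
      (conv (cpow (uncurry 𝓕.Fzi ∘ Prod.swap) N) (𝓕.invSubst (A.iterate a b c))) := by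
  obtain ⟨N, L, conv_eq, above⟩ := A.exists_conv_iterate_eq a b c
  have F_above := 𝓕.supportedAbove_F.cpow N
  have conv_iterate := 𝓕.invSubst_conv degFst_injective degFst_monotone
    (F_above.map degFst_monotone) (A.finiteBelow_iterate a b c)
  have hproduct := A.finiteBelow_product a b c
  have conv_product := 𝓕.invSubst_conv degSnd_injective degSnd_monotone
    (F_above.map degSnd_monotone)
    (𝓕.isZPowFamily_izwPow_F.finiteBelow_substPow_inr degSnd_injective hproduct)
  have invSubst_product := (𝓕.isZPowFamily_extend_iotaPow degSnd_monotone).substPow_inr_substPow_inr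
    degSnd_injective 𝓕.isZPowFamily_izwPow_F hproduct
  rw [𝓕.invSubst_cpow_F] at conv_iterate conv_product
  refine ⟨N, L, ?_, conv_iterate ▸ 𝓕.supportedAbove_invSubst above⟩
  rw [← conv_iterate, conv_eq, conv_product]
  exact congrArg _ invSubst_product

theorem iterate_eq_finsum (k l : ℤ) : A.iterate a b c (k, l) =
    ∑ᶠ q : ℕ × ℤ, iotaPow 𝓕.inv q.2 (k - q.1) •
      ∑ᶠ m, izwPow 𝓕.F m l q.1 • A.iterate b a c (q.2, m) := by
  obtain ⟨N, hN⟩ := A.Y_laurent b a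
  have finite_support : HasFiniteSupport fun q : ℕ × ℤ =>
      iotaPow 𝓕.inv q.2 (k - q.1) • A.S q.1 (A.Y b a q.2) := by
    refine ((Set.finite_Icc 0 (k - N).toNat).prod (Set.finite_Icc N k)).subset fun q hq => ?_
    have hq_le := 𝓕.le_of_iotaPow_ne_zero (left_ne_zero_of_smul hq)
    have hNq : N ≤ q.2 := by
      by_contra! h
      exact right_ne_zero_of_smul hq (by rw [hN _ h, map_zero])
    exact ⟨⟨by lia, by lia⟩, hNq, by lia⟩
  let coeff : V →+ V := (LinearMap.proj (R := R) l ∘ₗ A.Y.flip c).toAddMonoidHom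
  rw [iterate, A.skew a b]
  refine (coeff.map_finsum finite_support).trans (finsum_congr fun q => ?_)
  simp only [coeff, LinearMap.toAddMonoidHom_coe, map_smul]
  exact congrArg _ (A.translation _ c l q.1)

theorem iterate_comp_swap : A.iterate a b c ∘ Prod.swap =
    substPow (inr ℤ ℤ) (fun m => uncurry (izwPow 𝓕.F m))
      (𝓕.invSubst (A.iterate b a c) ∘ Prod.swap) := by
  funext ⟨l, k⟩
  rw [comp_apply, Prod.swap_prod_mk, iterate_eq_finsum,
    finsum_prod_smul_comm_of_finite (fun (n : ℕ) i => iotaPow 𝓕.inv i (k - n))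
      (fun n m => izwPow 𝓕.F m l n) (fun i m => A.iterate b a c (i, m))]
  · rw [substPow, finsum_eq_of_injective (g := fun x : ℕ × ℤ => (x.2, k - x.1))]
    · simp [𝓕.invSubst_apply]
    · intro x y h
      simp only [Prod.mk.injEq] at h
      exact Prod.ext (by lia) h.1
    · intro r hr
      have hr_le := (𝓕.le_add_of_izwPow_F_ne_zero (left_ne_zero_of_smul hr)).2
      simp only [inr_apply, Prod.snd_sub] at hr_le
      exact ⟨((k - r.2).toNat, r.1), Prod.ext rfl (by simp; lia)⟩
  · refine ((A.finiteBelow_iterate b a c (k + l, k)).biUnion fun p _ =>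
      (Set.finite_Icc 0 (k - p.1).toNat).prod (Set.finite_singleton p)).subset
        fun x ⟨hi, hm, hx⟩ => ?_
    have hi_le := 𝓕.le_of_iotaPow_ne_zero hi
    have hm_le := (𝓕.le_add_of_izwPow_F_ne_zero hm).1
    exact Set.mem_biUnion (x := x.2) ⟨hx, by simp [degFst]; lia, by simp [degFst]; lia⟩
      ⟨⟨by lia, by lia⟩, rfl⟩

end VertexFAlgebra

end VertexOperators

section Jacobi

open Function AddMonoidHom

theorem exists_supportedAbove_conv_eq {ι R M : Type*} [Fintype ι] [DecidableEq ι] [CommRing R]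
    [AddCommGroup M] [Module R M] {i k s : ι} (hik : i ≠ k) (hsk : s ≠ k)
    {Δ Δ' : (ι → ℤ) → R} {D D' L : ℤ × ℤ} (hΔ : SupportedAbove (degAt i) D Δ)
    (hΔ' : SupportedAbove (degAt k) D' Δ') {g : ℤ × ℤ → R} {P : ℤ → ℤ × ℤ → R}
    (hP : IsZPowFamily degSnd (1, 0) g P) (hg : SupportedAbove (.id (ℤ × ℤ)) 0 g)
    (hΔg : conv Δ (extend (plane i k) g 0) = fun e => Δ (e - Pi.single s 1))
    (hΔ'g : conv Δ' (extend (plane i k) g 0) = fun e => Δ' (e - Pi.single s 1))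
    {S c : ℤ × ℤ → M} (hS : FiniteBelow degFst S) (hc : FiniteBelow degSnd c) {N : ℕ}
    (h : conv (cpow g N) S = conv (cpow g N) (substPow (inr ℤ ℤ) P c))
    (hL : SupportedAbove (.id (ℤ × ℤ)) L (conv (cpow g N) S)) :
    ∃ (L' : ι → ℤ) (X : (ι → ℤ) → M), SupportedAbove (.id (ι → ℤ)) L' X ∧
      conv Δ X = conv Δ (extend (plane i k) S 0) ∧
      conv Δ' X = conv Δ' (extend (plane s k) c 0) := by
  have deg_left := degAt_comp_plane_left hik
  have deg_right := degAt_comp_plane_right hik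
  have cleared_eq : cleared (plane i k) (Pi.single s 1) g N S =
      cleared (plane i k) (Pi.single s 1) g N (substPow (inr ℤ ℤ) P c) := by
    funext q
    rw [cleared, cleared, h]
  refine ⟨_, cleared (plane i k) (Pi.single s 1) g N S, supportedAbove_cleared_plane hik hL, ?_, ?_⟩
  · exact hΔ.conv_cleared (deg_left ▸ degFst_injective)
      (deg_left ▸ hg.map degFst_monotone) hΔg (deg_left ▸ hS) N
  · rw [cleared_eq, hΔ'.conv_cleared (deg_right ▸ degSnd_injective)
      (deg_right ▸ hg.map degSnd_monotone) hΔ'g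
      (deg_right ▸ hP.finiteBelow_substPow_inr degSnd_injective hc) N]
    exact hΔ'.conv_extend_plane_substPow hik hsk hP hΔ'g hc

variable {R V : Type*} [CommRing R] [AddCommGroup V] [Module R V] {𝓕 : FormalGroupLaw R}

namespace FormalGroupLaw

variable (𝓕) in
theorem exists_supportedAbove_expansion_sub {i j k : Fin 3} (hi : k ≠ i) (hj : k ≠ j) :
    ∃ L, SupportedAbove (degAt k) L (𝓕.expansion i - 𝓕.expansion j) :=
  (𝓕.isExpansion_expansion i).exists_supportedAbove_sub (𝓕.isExpansion_expansion j) hi hj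

end FormalGroupLaw

namespace VertexFAlgebra

variable (A : VertexFAlgebra R 𝓕 V) (a b c : V)

theorem exists_conv_expansion_iterate : ∃ (L : Fin 3 → ℤ) (X : (Fin 3 → ℤ) → V),
    SupportedAbove (.id (Fin 3 → ℤ)) L X ∧
    conv (𝓕.expansion 2 - 𝓕.expansion 1) X =
      conv (𝓕.expansion 2 - 𝓕.expansion 1) (extend (plane 0 2) (A.iterate a b c) 0) ∧
    conv (𝓕.expansion 0 - 𝓕.expansion 1) X =
      conv (𝓕.expansion 0 - 𝓕.expansion 1) (extend (plane 1 2) (A.product a b c) 0) := by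
  obtain ⟨N, L, conv_eq, above⟩ := A.exists_conv_iterate_eq a b c
  obtain ⟨_, hΔ⟩ := 𝓕.exists_supportedAbove_expansion_sub (i := 2) (j := 1) (k := 0)
    (by decide) (by decide)
  obtain ⟨_, hΔ'⟩ := 𝓕.exists_supportedAbove_expansion_sub (i := 0) (j := 1) (k := 2)
    (by decide) (by decide)
  exact exists_supportedAbove_conv_eq (by decide) (by decide) hΔ hΔ' 𝓕.isZPowFamily_izwPow_F
    𝓕.supportedAbove_F (𝓕.conv_expansion_sub_F 2 1) (𝓕.conv_expansion_sub_F 0 1)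
    (A.finiteBelow_iterate a b c) (A.finiteBelow_product a b c) conv_eq above

theorem exists_conv_expansion_invSubst_iterate : ∃ (L : Fin 3 → ℤ) (X : (Fin 3 → ℤ) → V),
    SupportedAbove (.id (Fin 3 → ℤ)) L X ∧
    conv (𝓕.expansion 2 - 𝓕.expansion 1) X = conv (𝓕.expansion 2 - 𝓕.expansion 1)
      (extend (plane 0 1) (𝓕.invSubst (A.iterate a b c)) 0) ∧
    conv (𝓕.expansion 0 - 𝓕.expansion 2) X =
      conv (𝓕.expansion 0 - 𝓕.expansion 2) (extend (plane 2 1) (A.product a b c) 0) := by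
  obtain ⟨N, L, conv_eq, above⟩ := A.exists_conv_invSubst_iterate_eq a b c
  obtain ⟨_, hΔ⟩ := 𝓕.exists_supportedAbove_expansion_sub (i := 2) (j := 1) (k := 0)
    (by decide) (by decide)
  obtain ⟨_, hΔ'⟩ := 𝓕.exists_supportedAbove_expansion_sub (i := 0) (j := 2) (k := 1)
    (by decide) (by decide)
  have conv_Fzi (i j : Fin 3) : conv (𝓕.expansion i - 𝓕.expansion j)
      (extend (plane 0 1) (uncurry 𝓕.Fzi ∘ Prod.swap) 0) =
        fun e => (𝓕.expansion i - 𝓕.expansion j) (e - Pi.single 2 1) := by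
    rw [extend_plane_swap (by decide), 𝓕.conv_expansion_sub_Fzi]
  have Fzi_above : SupportedAbove (.id (ℤ × ℤ)) 0 (uncurry 𝓕.Fzi ∘ Prod.swap) :=
    fun p hp => (𝓕.supportedAbove_Fzi p.swap hp).symm
  exact exists_supportedAbove_conv_eq (by decide) (by decide) hΔ hΔ'
    𝓕.isZPowFamily_invSubst_izwPow Fzi_above (conv_Fzi 2 1) (conv_Fzi 0 2)
    (𝓕.finiteBelow_invSubst degFst_injective degFst_monotone (A.finiteBelow_iterate a b c))
    (A.finiteBelow_product a b c) conv_eq above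

theorem conv_expansion_iterate_comm :
    conv (𝓕.expansion 2 - 𝓕.expansion 1) (extend (plane 0 2) (A.iterate a b c) 0) =
      conv (𝓕.expansion 2 - 𝓕.expansion 1)
        (extend (plane 0 1) (𝓕.invSubst (A.iterate b a c)) 0) := by
  obtain ⟨_, hΔ⟩ := 𝓕.exists_supportedAbove_expansion_sub (i := 2) (j := 1) (k := 0)
    (by decide) (by decide)
  have F_swap : uncurry 𝓕.F ∘ Prod.swap = uncurry 𝓕.F := funext fun p => 𝓕.F_comm p.2 p.1
  have conv_F : conv (𝓕.expansion 2 - 𝓕.expansion 1) (extend (plane 2 0) (uncurry 𝓕.F) 0) =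
      fun e => (𝓕.expansion 2 - 𝓕.expansion 1) (e - Pi.single 1 1) := by
    rw [← F_swap, extend_plane_swap (by decide), 𝓕.conv_expansion_sub_F]
  have finite := (𝓕.finiteBelow_invSubst degFst_injective degFst_monotone
    (A.finiteBelow_iterate b a c)).comp_swap
  rw [← extend_plane_swap (i := 2) (k := 0) (by decide), A.iterate_comp_swap,
    hΔ.conv_extend_plane_substPow (by decide) (by decide) 𝓕.isZPowFamily_izwPow_F conv_F finite,
    extend_plane_swap (by decide)]

theorem conv_expansion_product_sub :
    conv (𝓕.expansion 0 - 𝓕.expansion 1) (extend (plane 1 2) (A.product a b c) 0) -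
        conv (𝓕.expansion 0 - 𝓕.expansion 2)
          (extend (plane 1 2) (A.product b a c ∘ Prod.swap) 0) =
      conv (𝓕.expansion 2 - 𝓕.expansion 1) (extend (plane 0 2) (A.iterate a b c) 0) := by
  obtain ⟨_, X, hX, X_iterate, X_product⟩ := A.exists_conv_expansion_iterate a b c
  obtain ⟨_, Q, hQ, Q_iterate, Q_product⟩ := A.exists_conv_expansion_invSubst_iterate b a c
  rw [extend_plane_swap (by decide), ← X_product, ← Q_product, ← X_iterate]
  refine (𝓕.isExpansion_expansion 2).conv_sub_sub_conv_sub 𝓕.supportedAbove_relator (by decide)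
    (𝓕.isExpansion_expansion 1) (𝓕.isExpansion_expansion 0) hX hQ ?_
  rw [X_iterate, Q_iterate, A.conv_expansion_iterate_comm]

end VertexFAlgebra

end Jacobi

/-- the `F`-Jacobi identity for a vertex `F`-algebra, as an identity of
bilateral series in `V⟦z0^{±1}, z1^{±1}, z2^{±1}⟧` (coefficient of `z0^e0 z1^e1 z2^e2`,
applied to an arbitrary state `c`):
`i_{z1,z0} z2⁻¹δ_F(F(z1,ιz0)/z2)·Y(Y(a,z0)b,z2)c`
`= i_{z1,z2} z0⁻¹δ_F(F(z1,ιz2)/z0)·Y(a,z1)Y(b,z2)c`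
`- i_{z2,z1} z0⁻¹δ_F(F(z1,ιz2)/z0)·Y(b,z2)Y(a,z1)c`. -/
theorem vertexF_jacobi_identity (R : Type*) [CommRing R] (𝓕 : FormalGroupLaw R)
    (V : Type*) [AddCommGroup V] [Module R V] (A : VertexFAlgebra R 𝓕 V)
    (a b : V) : ∀ (c : V) (e0 e1 e2 : ℤ),
    (∑ᶠ p : ℤ × ℤ, (∑ᶠ m : ℤ, 𝓕.delta (e2 - p.2) m * izwPow 𝓕.Fzi m e1 (e0 - p.1))
        • A.Y (A.Y a b p.1) c p.2)
    = (∑ᶠ p : ℤ × ℤ, (∑ᶠ m : ℤ, 𝓕.delta e0 m * izwPow 𝓕.Fzi m (e1 - p.1) (e2 - p.2))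
        • A.Y a (A.Y b c p.2) p.1)
    - ∑ᶠ p : ℤ × ℤ, (∑ᶠ m : ℤ, 𝓕.delta e0 m * iwzPowNeg 𝓕.Fzi m (e1 - p.1) (e2 - p.2))
        • A.Y b (A.Y a c p.1) p.2 := by
  intro c e0 e1 e2
  have jacobi := congrFun (A.conv_expansion_product_sub a b c) ![e0, e1, e2]
  rw [Pi.sub_apply, ← 𝓕.nested_delta_izwPow, ← 𝓕.nested_delta_iwzPowNeg,
    ← 𝓕.nested_delta_izwPow_swap] at jacobi
  simp only [conv_extend_right (plane_injective (by decide : (1 : Fin 3) ≠ 2)),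
    conv_extend_right (plane_injective (by decide : (0 : Fin 3) ≠ 2))] at jacobi
  simpa [nested, plane_apply, VertexFAlgebra.iterate, VertexFAlgebra.product] using jacobi.symm
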